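/- arXiv:2502.11162 — 3 statements merged into one kernel-verified Lean document; each statement's English description precedes it below -/
import Mathlib

section
/- Let N, d, C be natural numbers at least 2, let k be a natural number with d + 6 ≤ k, let p ∈ (0, ∞], and let σ, δ > 0 satisfy σ/δ < 1/(2·c_p^+(d)) where c_p^+(d) = d^{[1/2 − 1/p]_+} (with 1/∞ = 0). Then there is a universal constant C₀ such that for every δ-separated dataset D of size N with C classes in ℝ^d, there exists a feedforward ReLU neural network f : ℝ^d → ℝ of width k and depth at most C₀ · N · d · log₂(d / (1 − 2·c_p^+(d)·σ/δ)) that (σ, p)-robustly memorizes D. -/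
open scoped ENNReal BigOperators

noncomputable section

/-- A multilayer perceptron (feedforward ReLU network) with input dimension `m`
and output dimension `n`, given as a nonempty list of affine layers. -/
inductive MLP : ℕ → ℕ → Type
  | last : {m n : ℕ} → Matrix (Fin n) (Fin m) ℝ → (Fin n → ℝ) → MLP m n
  | cons : {m h n : ℕ} → Matrix (Fin h) (Fin m) ℝ → (Fin h → ℝ) → MLP h n → MLP m n

/-- Evaluation of an MLP: every affine layer except the last is followed by a
coordinatewise ReLU. -/
def MLP.eval : {m n : ℕ} → MLP m n → (Fin m → ℝ) → Fin n → ℝ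
  | _, _, .last W b, x => W.mulVec x + b
  | _, _, .cons W b rest, x => MLP.eval rest fun i => max ((W.mulVec x + b) i) 0

/-- Depth of an MLP: the number of affine layers. -/
def MLP.depth : {m n : ℕ} → MLP m n → ℕ
  | _, _, .last _ _ => 1
  | _, _, .cons _ _ rest => MLP.depth rest + 1

/-- Width of an MLP: the maximum of the hidden-layer dimensions. -/
def MLP.width : {m n : ℕ} → MLP m n → ℕ
  | _, _, .last _ _ => 0
  | _, _, @MLP.cons _ h _ _ _ rest => max h (MLP.width rest)

/-- The `l_p` (quasi-)norm on `ℝ^d`, for `p ∈ (0,∞]`. -/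
def lpNorm (p : ℝ≥0∞) {d : ℕ} (x : Fin d → ℝ) : ℝ :=
  if p = ⊤ then ⨆ i, |x i| else (∑ i, |x i| ^ p.toReal) ^ (1 / p.toReal)

/-- The `l_p` norm on `ℝ^d` with a real exponent `p`. -/
def lpNormR (p : ℝ) {d : ℕ} (x : Fin d → ℝ) : ℝ := (∑ i, |x i| ^ p) ^ (1 / p)

/-- `1/p`, with the convention `1/∞ = 0`. -/
def rinv (p : ℝ≥0∞) : ℝ := if p = ⊤ then 0 else 1 / p.toReal

/-- `c_p^+(d) = d^{[1/2 - 1/p]_+}`. -/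
def cplus (p : ℝ≥0∞) (d : ℕ) : ℝ := (d : ℝ) ^ max ((1 : ℝ) / 2 - rinv p) 0

/-- `c_p^-(d) = d^{[1/2 - 1/p]_-}`. -/
def cminus (p : ℝ≥0∞) (d : ℕ) : ℝ := (d : ℝ) ^ min ((1 : ℝ) / 2 - rinv p) 0

/-- A dataset is `(δ, q)`-separated if the minimal `l_q` distance between
differently labeled points equals `δ`. -/
def Separated {N d : ℕ} (q : ℝ≥0∞) (δ : ℝ) (X : Fin N → Fin d → ℝ) (Y : Fin N → ℕ) : Prop :=
  (∀ i j, Y i ≠ Y j → δ ≤ lpNorm q (X i - X j)) ∧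
    ∃ i j, Y i ≠ Y j ∧ lpNorm q (X i - X j) = δ

/-- `f` `(σ, p)`-robustly memorizes the dataset `(X, Y)`. -/
def RobustMem {N d : ℕ} (p : ℝ≥0∞) (σ : ℝ) (X : Fin N → Fin d → ℝ) (Y : Fin N → ℕ)
    (f : (Fin d → ℝ) → ℝ) : Prop :=
  ∀ i, ∀ x : Fin d → ℝ, lpNorm p (x - X i) ≤ σ → f x = (Y i : ℝ)

/-- A matrix `M` `(σ, k)`-preserves a dataset: Euclidean distances between points of
`σ`-neighborhoods (in `l₂`) of differently labeled data points do not decrease. -/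
def Preserves {N d m : ℕ} (σ : ℝ) (X : Fin N → Fin d → ℝ) (Y : Fin N → ℕ)
    (M : Matrix (Fin m) (Fin d) ℝ) : Prop :=
  ∀ i j, Y i ≠ Y j → ∀ a a' : Fin d → ℝ,
    lpNorm 2 (a - X i) ≤ σ → lpNorm 2 (a' - X j) ≤ σ →
      lpNorm 2 (a - a') ≤ lpNorm 2 (M.mulVec a - M.mulVec a')

/-- The `l₂ → l₂` (spectral) operator norm of a matrix. -/
def matOpNorm {m d : ℕ} (M : Matrix (Fin m) (Fin d) ℝ) : ℝ :=
  sSup {c | ∃ x : Fin d → ℝ, lpNorm 2 x ≤ 1 ∧ c = lpNorm 2 (M.mulVec x)}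

/-- Generalized binomial coefficient `C(s, m) = s(s-1)⋯(s-m+1)/m!`. -/
def gchoose (s : ℝ) (m : ℕ) : ℝ := (∏ i ∈ Finset.range m, (s - (i : ℝ))) / (m.factorial : ℝ)

/-- Affine real functionals. -/
def IsAff {ι : Type} [Fintype ι] (f : (ι → ℝ) → ℝ) : Prop :=
  ∃ (w : ι → ℝ) (b : ℝ), ∀ s, f s = ∑ j, w j * s j + b

theorem IsAff.const {ι : Type} [Fintype ι] (c : ℝ) : IsAff (fun _ : ι → ℝ => c) :=
  ⟨0, c, by simp⟩

theorem IsAff.proj {ι : Type} [Fintype ι] (i : ι) : IsAff (fun s : ι → ℝ => s i) := by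
  classical
  exact ⟨Pi.single i 1, 0, by intro s; simp [Pi.single_apply]⟩

theorem IsAff.add {ι : Type} [Fintype ι] {f g : (ι → ℝ) → ℝ} (hf : IsAff f) (hg : IsAff g) :
    IsAff (fun s => f s + g s) := by
  obtain ⟨w, b, h⟩ := hf
  obtain ⟨w', b', h'⟩ := hg
  refine ⟨w + w', b + b', fun s => ?_⟩
  simp only [h, h', Pi.add_apply, add_mul, Finset.sum_add_distrib]
  ring

theorem IsAff.cmul {ι : Type} [Fintype ι] {f : (ι → ℝ) → ℝ} (c : ℝ) (hf : IsAff f) :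
    IsAff (fun s => c * f s) := by
  obtain ⟨w, b, h⟩ := hf
  refine ⟨fun i => c * w i, c * b, fun s => ?_⟩
  simp only [h, mul_add, Finset.mul_sum, mul_assoc]

theorem IsAff.sub {ι : Type} [Fintype ι] {f g : (ι → ℝ) → ℝ} (hf : IsAff f) (hg : IsAff g) :
    IsAff (fun s => f s - g s) := by
  have := hf.add (hg.cmul (-1))
  convert this using 2
  ring

/-- A single affine layer followed by ReLU. -/
def IsLayer {ι κ : Type} [Fintype ι] (L : (ι → ℝ) → (κ → ℝ)) : Prop :=
  ∀ i, ∃ f, IsAff f ∧ ∀ s, L s i = max (f s) 0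

/-- `n`-fold compositions of layers on a fixed index type. -/
inductive RN {ι : Type} [Fintype ι] : ℕ → ((ι → ℝ) → (ι → ℝ)) → Prop
  | nil : RN 0 id
  | step {n : ℕ} {F L : (ι → ℝ) → (ι → ℝ)} : IsLayer L → RN n F → RN (n + 1) (L ∘ F)

theorem RN.comp {ι : Type} [Fintype ι] {m n : ℕ} {F G : (ι → ℝ) → (ι → ℝ)}
    (hF : RN n F) (hG : RN m G) : RN (n + m) (G ∘ F) := by
  induction hG with
  | nil => exact hF
  | step hL _ ih => exact RN.step (F := _ ∘ F) hL ih

theorem RN.one {ι : Type} [Fintype ι] {L : (ι → ℝ) → (ι → ℝ)} (h : IsLayer L) : RN 1 L :=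
  RN.step h RN.nil

theorem exists_cons {m h n : ℕ} {ι κ : Type} [Fintype ι] [Fintype κ] (e : ι ≃ Fin m) (e' : κ ≃ Fin h)
    {L : (ι → ℝ) → (κ → ℝ)} (hL : IsLayer L) (tail : MLP h n) :
    ∃ net : MLP m n, net.depth = tail.depth + 1 ∧ net.width = max h tail.width ∧
      ∀ s : ι → ℝ, net.eval (s ∘ e.symm) = tail.eval (L s ∘ e'.symm) := by
  choose f hf hfL using hL
  choose w b hwb using hf
  refine ⟨MLP.cons (fun i j => w (e'.symm i) (e.symm j)) (fun i => b (e'.symm i)) tail, rfl, rfl, ?_⟩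
  intro s
  simp only [MLP.eval]
  congr 1
  funext i
  simp only [Function.comp, hfL, hwb, Matrix.mulVec, dotProduct, Pi.add_apply]
  congr 2
  exact (Equiv.sum_comp e.symm (fun j => w (e'.symm i) j * s j))

theorem exists_rn {h n : ℕ} {ι : Type} [Fintype ι] (e : ι ≃ Fin h)
    {k : ℕ} {F : (ι → ℝ) → (ι → ℝ)} (hF : RN k F) : ∀ (tail : MLP h n),
    ∃ net : MLP h n, net.depth = tail.depth + k ∧ tail.width ≤ net.width ∧
      net.width ≤ max h tail.width ∧
      ∀ s : ι → ℝ, net.eval (s ∘ e.symm) = tail.eval (F s ∘ e.symm) := by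
  induction hF with
  | nil => intro tail; exact ⟨tail, rfl, le_rfl, le_max_right _ _, fun s => rfl⟩
  | step hL _ ih =>
    intro tail
    obtain ⟨t1, hd, hw, he⟩ := exists_cons e e hL tail
    obtain ⟨t2, hd2, hw2, hw2', he2⟩ := ih t1
    refine ⟨t2, by omega, by omega, by omega, fun s => ?_⟩
    rw [he2, he]; rfl

/-- Register machine layer. -/
def lay {d : ℕ} (f0 f1 f2 f3 : ((Fin d ⊕ Fin 4) → ℝ) → ℝ) (s : (Fin d ⊕ Fin 4) → ℝ) :
    (Fin d ⊕ Fin 4) → ℝ :=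
  Sum.elim (fun t => max (s (Sum.inl t)) 0)
    ![max (f0 s) 0, max (f1 s) 0, max (f2 s) 0, max (f3 s) 0]

theorem lay_isLayer {d : ℕ} {f0 f1 f2 f3 : ((Fin d ⊕ Fin 4) → ℝ) → ℝ}
    (h0 : IsAff f0) (h1 : IsAff f1) (h2 : IsAff f2) (h3 : IsAff f3) :
    IsLayer (lay f0 f1 f2 f3) := by
  rintro (t | j)
  · exact ⟨_, IsAff.proj (Sum.inl t), fun s => rfl⟩
  · fin_cases j
    exacts [⟨f0, h0, fun s => rfl⟩, ⟨f1, h1, fun s => rfl⟩, ⟨f2, h2, fun s => rfl⟩,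
      ⟨f3, h3, fun s => rfl⟩]

theorem lay_inl {d : ℕ} (f0 f1 f2 f3 : ((Fin d ⊕ Fin 4) → ℝ) → ℝ) (s) (t : Fin d) :
    lay f0 f1 f2 f3 s (Sum.inl t) = max (s (Sum.inl t)) 0 := rfl
theorem lay_0 {d : ℕ} (f0 f1 f2 f3 : ((Fin d ⊕ Fin 4) → ℝ) → ℝ) (s) :
    lay f0 f1 f2 f3 s (Sum.inr 0) = max (f0 s) 0 := rfl
theorem lay_1 {d : ℕ} (f0 f1 f2 f3 : ((Fin d ⊕ Fin 4) → ℝ) → ℝ) (s) :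
    lay f0 f1 f2 f3 s (Sum.inr 1) = max (f1 s) 0 := rfl
theorem lay_2 {d : ℕ} (f0 f1 f2 f3 : ((Fin d ⊕ Fin 4) → ℝ) → ℝ) (s) :
    lay f0 f1 f2 f3 s (Sum.inr 2) = max (f2 s) 0 := rfl
theorem lay_3 {d : ℕ} (f0 f1 f2 f3 : ((Fin d ⊕ Fin 4) → ℝ) → ℝ) (s) :
    lay f0 f1 f2 f3 s (Sum.inr 3) = max (f3 s) 0 := rfl

/-- Tent-map loop. -/
theorem loop_lemma (d m : ℕ) : ∃ F : ((Fin d ⊕ Fin 4) → ℝ) → ((Fin d ⊕ Fin 4) → ℝ), RN m F ∧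
    ∀ (s : (Fin d ⊕ Fin 4) → ℝ) (B : ℝ), (∀ t, 0 ≤ s (Sum.inl t)) → 0 ≤ s (Sum.inr 0) → 0 ≤ B →
      0 ≤ s (Sum.inr 2) → s (Sum.inr 2) ≤ 1 → s (Sum.inr 3) = max (s (Sum.inr 2) - 1 / 2) 0 →
      s (Sum.inr 1) = B + s (Sum.inr 2) * (1 - s (Sum.inr 2)) →
      (∀ t, F s (Sum.inl t) = s (Sum.inl t)) ∧ F s (Sum.inr 0) = s (Sum.inr 0) ∧
      0 ≤ F s (Sum.inr 2) ∧ F s (Sum.inr 2) ≤ 1 ∧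
      F s (Sum.inr 3) = max (F s (Sum.inr 2) - 1 / 2) 0 ∧
      F s (Sum.inr 1) = B + F s (Sum.inr 2) * (1 - F s (Sum.inr 2)) / 4 ^ m := by
  induction m with
  | zero =>
    refine ⟨id, RN.nil, ?_⟩
    intro s B h1 h2 h3 h4 h5 h6 h7
    simp_all
  | succ m ih =>
    obtain ⟨F, hF, h⟩ := ih
    refine ⟨lay (fun s => s (Sum.inr 0))
      (fun s => s (Sum.inr 1) - (1 / 4 ^ (m + 1)) * (2 * s (Sum.inr 2) - 4 * s (Sum.inr 3)))
      (fun s => 2 * s (Sum.inr 2) - 4 * s (Sum.inr 3))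
      (fun s => (2 * s (Sum.inr 2) - 4 * s (Sum.inr 3)) - 1 / 2) ∘ F, RN.step (lay_isLayer
        (IsAff.proj _) ((IsAff.proj _).sub (IsAff.cmul _
          (((IsAff.proj _).cmul _).sub ((IsAff.proj _).cmul _))))
        (((IsAff.proj _).cmul _).sub ((IsAff.proj _).cmul _))
        ((((IsAff.proj _).cmul _).sub ((IsAff.proj _).cmul _)).sub (IsAff.const _))) hF, ?_⟩
    intro s B h1 h2 h3 h4 h5 h6 h7
    obtain ⟨a1, a2, a3, a4, a5, a6⟩ := h s B h1 h2 h3 h4 h5 h6 h7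
    simp only [Function.comp, lay_inl, lay_0, lay_1, lay_2, lay_3]
    generalize F s = r at *
    generalize hu : r (Sum.inr 2) = u at *
    generalize hv : r (Sum.inr 3) = v at *
    have hT : 0 ≤ 2 * u - 4 * v ∧ 2 * u - 4 * v ≤ 1 ∧
        u * (1 - u) = ((2 * u - 4 * v) + (2 * u - 4 * v) * (1 - (2 * u - 4 * v))) / 4 := by
      rcases le_total (u - 1 / 2) 0 with hc | hc
      · rw [max_eq_right hc] at a5
        subst a5
        refine ⟨by linarith, by linarith, by ring⟩
      · rw [max_eq_left hc] at a5
        subst a5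
        refine ⟨by linarith, by linarith, by ring⟩
    obtain ⟨t1, t2, t3⟩ := hT
    generalize 2 * u - 4 * v = T at *
    have hS : r (Sum.inr 1) - 1 / 4 ^ (m + 1) * T = B + T * (1 - T) / 4 ^ (m + 1) := by
      rw [a6, t3]
      field_simp
      ring
    have hS0 : 0 ≤ B + T * (1 - T) / 4 ^ (m + 1) := by
      have : 0 ≤ T * (1 - T) := mul_nonneg t1 (by linarith)
      positivity
    rw [hS, max_eq_left hS0, max_eq_left t1]
    refine ⟨fun t => ?_, ?_, t1, t2, rfl, rfl⟩
    · rw [a1, max_eq_left (h1 t)]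
    · rw [a2, max_eq_left h2]

/-- One coordinate: adds an approximate squared clipped distance to register 1. -/
theorem coord_lemma (d m : ℕ) (t₀ : Fin d) (c δ : ℝ) (hδ : 0 < δ) :
    ∃ F : ((Fin d ⊕ Fin 4) → ℝ) → ((Fin d ⊕ Fin 4) → ℝ), RN (m + 3) F ∧
    ∀ (s : (Fin d ⊕ Fin 4) → ℝ), (∀ t, 0 ≤ s (Sum.inl t)) → 0 ≤ s (Sum.inr 0) →
      0 ≤ s (Sum.inr 1) →
      (∀ t, F s (Sum.inl t) = s (Sum.inl t)) ∧ F s (Sum.inr 0) = s (Sum.inr 0) ∧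
      s (Sum.inr 1) + (min (|s (Sum.inl t₀) - c| / δ) 1) ^ 2 ≤ F s (Sum.inr 1) ∧
      F s (Sum.inr 1) ≤ s (Sum.inr 1) + (min (|s (Sum.inl t₀) - c| / δ) 1) ^ 2 + 1 / 4 ^ m := by
  obtain ⟨F, hF, h⟩ := loop_lemma d m
  have hL1 : IsLayer (lay (d := d) (fun s => s (Sum.inr 0)) (fun s => s (Sum.inr 1))
      (fun s => (1 / δ) * (s (Sum.inl t₀) - c)) (fun s => (-(1 / δ)) * (s (Sum.inl t₀) - c))) :=
    lay_isLayer (IsAff.proj _) (IsAff.proj _) (((IsAff.proj _).sub (IsAff.const _)).cmul _)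
      (((IsAff.proj _).sub (IsAff.const _)).cmul _)
  have hL2 : IsLayer (lay (d := d) (fun s => s (Sum.inr 0)) (fun s => s (Sum.inr 1))
      (fun s => s (Sum.inr 2) + s (Sum.inr 3)) (fun s => (s (Sum.inr 2) + s (Sum.inr 3)) - 1)) :=
    lay_isLayer (IsAff.proj _) (IsAff.proj _) ((IsAff.proj _).add (IsAff.proj _))
      (((IsAff.proj _).add (IsAff.proj _)).sub (IsAff.const _))
  have hL3 : IsLayer (lay (d := d) (fun s => s (Sum.inr 0))
      (fun s => s (Sum.inr 1) + (s (Sum.inr 2) - s (Sum.inr 3)))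
      (fun s => s (Sum.inr 2) - s (Sum.inr 3)) (fun s => (s (Sum.inr 2) - s (Sum.inr 3)) - 1 / 2)) :=
    lay_isLayer (IsAff.proj _) ((IsAff.proj _).add ((IsAff.proj _).sub (IsAff.proj _)))
      ((IsAff.proj _).sub (IsAff.proj _))
      (((IsAff.proj _).sub (IsAff.proj _)).sub (IsAff.const _))
  refine ⟨_, by
    have := (RN.step hL3 (RN.step hL2 (RN.one hL1))).comp hF
    rw [show m + 3 = 1 + 1 + 1 + m by ring]
    exact this, ?_⟩
  intro s h1 h2 h3
  set u := min (|s (Sum.inl t₀) - c| / δ) 1 with hu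
  have hu0 : 0 ≤ u := le_min (by positivity) zero_le_one
  have hu1 : u ≤ 1 := min_le_right _ _
  have habs : max (1 / δ * (s (Sum.inl t₀) - c)) 0 + max (-(1 / δ) * (s (Sum.inl t₀) - c)) 0
      = |s (Sum.inl t₀) - c| / δ := by
    have hd : 0 < 1 / δ := by positivity
    rcases le_total 0 (s (Sum.inl t₀) - c) with hc | hc
    · rw [abs_of_nonneg hc, max_eq_left (by positivity), max_eq_right (by nlinarith)]
      ring
    · rw [abs_of_nonpos hc, max_eq_right (by nlinarith), max_eq_left (by nlinarith)]
      ring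
  have hclip : max (|s (Sum.inl t₀) - c| / δ) 0 - max (|s (Sum.inl t₀) - c| / δ - 1) 0 = u := by
    rw [max_eq_left (by positivity), hu]
    rcases le_total (|s (Sum.inl t₀) - c| / δ) 1 with hc | hc
    · rw [max_eq_right (by linarith), min_eq_left hc]; ring
    · rw [max_eq_left (by linarith), min_eq_right hc]; ring
  simp only [Function.comp]
  set r : (Fin d ⊕ Fin 4) → ℝ := lay (d := d) (fun s => s (Sum.inr 0))
      (fun s => s (Sum.inr 1) + (s (Sum.inr 2) - s (Sum.inr 3)))
      (fun s => s (Sum.inr 2) - s (Sum.inr 3)) (fun s => (s (Sum.inr 2) - s (Sum.inr 3)) - 1 / 2)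
      (lay (d := d) (fun s => s (Sum.inr 0)) (fun s => s (Sum.inr 1))
      (fun s => s (Sum.inr 2) + s (Sum.inr 3)) (fun s => (s (Sum.inr 2) + s (Sum.inr 3)) - 1)
      (lay (d := d) (fun s => s (Sum.inr 0)) (fun s => s (Sum.inr 1))
      (fun s => (1 / δ) * (s (Sum.inl t₀) - c)) (fun s => (-(1 / δ)) * (s (Sum.inl t₀) - c)) s))
      with hr
  have r0 : ∀ t, r (Sum.inl t) = s (Sum.inl t) := by
    intro t
    simp only [hr, lay_inl, max_eq_left (h1 t)]
  have r1 : r (Sum.inr 0) = s (Sum.inr 0) := by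
    simp only [hr, lay_0, max_eq_left h2]
  have r2 : r (Sum.inr 2) = u := by
    simp only [hr, lay_2, lay_3, habs, hclip, max_eq_left hu0]
  have r3 : r (Sum.inr 3) = max (u - 1 / 2) 0 := by
    simp only [hr, lay_2, lay_3, habs, hclip]
  have r4 : r (Sum.inr 1) = s (Sum.inr 1) + u := by
    simp only [hr, lay_1, lay_2, lay_3, habs, hclip, max_eq_left h3]
    rw [max_eq_left (by linarith)]
  obtain ⟨a1, a2, a3, a4, a5, a6⟩ := h r (s (Sum.inr 1) + u ^ 2) (by simpa [r0] using h1)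
    (by rw [r1]; exact h2) (by positivity) (by rw [r2]; exact hu0) (by rw [r2]; exact hu1)
    (by rw [r2, r3]) (by rw [r4, r2]; ring)
  generalize F r = q at *
  have hq0 : 0 ≤ q (Sum.inr 2) * (1 - q (Sum.inr 2)) := mul_nonneg a3 (by linarith)
  have hq1 : q (Sum.inr 2) * (1 - q (Sum.inr 2)) ≤ 1 := by nlinarith
  refine ⟨fun t => by rw [a1, r0], by rw [a2, r1], ?_, ?_⟩
  · rw [a6]
    have : 0 ≤ q (Sum.inr 2) * (1 - q (Sum.inr 2)) / 4 ^ m := by positivity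
    linarith
  · rw [a6]
    have : q (Sum.inr 2) * (1 - q (Sum.inr 2)) / 4 ^ m ≤ 1 / 4 ^ m := by gcongr
    linarith

theorem coords_lemma (d m : ℕ) (c : Fin d → ℝ) (δ : ℝ) (hδ : 0 < δ) (l : List (Fin d)) :
    ∃ F : ((Fin d ⊕ Fin 4) → ℝ) → ((Fin d ⊕ Fin 4) → ℝ), RN (l.length * (m + 3)) F ∧
    ∀ (s : (Fin d ⊕ Fin 4) → ℝ), (∀ t, 0 ≤ s (Sum.inl t)) → 0 ≤ s (Sum.inr 0) →
      0 ≤ s (Sum.inr 1) →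
      (∀ t, F s (Sum.inl t) = s (Sum.inl t)) ∧ F s (Sum.inr 0) = s (Sum.inr 0) ∧
      s (Sum.inr 1) + (l.map fun t => (min (|s (Sum.inl t) - c t| / δ) 1) ^ 2).sum
        ≤ F s (Sum.inr 1) ∧
      F s (Sum.inr 1) ≤ s (Sum.inr 1) +
        (l.map fun t => (min (|s (Sum.inl t) - c t| / δ) 1) ^ 2).sum + l.length / 4 ^ m := by
  induction l with
  | nil =>
    refine ⟨id, by simpa using RN.nil, ?_⟩
    intro s h1 h2 h3
    simp
  | cons t₀ l ih =>
    obtain ⟨F, hF, h⟩ := ih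
    obtain ⟨G, hG, h'⟩ := coord_lemma d m t₀ (c t₀) δ hδ
    refine ⟨F ∘ G, by
      have := hG.comp hF
      rwa [show (t₀ :: l).length * (m + 3) = m + 3 + l.length * (m + 3) by simp; ring], ?_⟩
    intro s h1 h2 h3
    obtain ⟨a1, a2, a3, a4⟩ := h' s h1 h2 h3
    obtain ⟨b1, b2, b3, b4⟩ := h (G s) (by simpa [a1] using h1) (by simpa [a2] using h2)
      (le_trans (by positivity) a3)
    simp only [a1, a2] at b1 b2 b3 b4
    simp only [Function.comp, List.map_cons, List.sum_cons, List.length_cons]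
    refine ⟨b1, b2, by linarith, ?_⟩
    push_cast
    rw [add_div]
    linarith

/-- One data point. -/
theorem point_lemma (d m : ℕ) (c : Fin d → ℝ) (δ lo hi y : ℝ) (hδ : 0 < δ) (hy : 0 ≤ y)
    (hlh : lo + d / 4 ^ m < hi) :
    ∃ F : ((Fin d ⊕ Fin 4) → ℝ) → ((Fin d ⊕ Fin 4) → ℝ), RN (d * (m + 3) + 3) F ∧
    ∀ (s : (Fin d ⊕ Fin 4) → ℝ), (∀ t, 0 ≤ s (Sum.inl t)) → 0 ≤ s (Sum.inr 0) →
      s (Sum.inr 1) = 0 →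
      (∀ t, F s (Sum.inl t) = s (Sum.inl t)) ∧ F s (Sum.inr 1) = 0 ∧
      s (Sum.inr 0) ≤ F s (Sum.inr 0) ∧ F s (Sum.inr 0) ≤ max (s (Sum.inr 0)) y ∧
      (∑ t, (min (|s (Sum.inl t) - c t| / δ) 1) ^ 2 ≤ lo → y ≤ F s (Sum.inr 0)) ∧
      (hi ≤ ∑ t, (min (|s (Sum.inl t) - c t| / δ) 1) ^ 2 → F s (Sum.inr 0) = s (Sum.inr 0)) := by
  obtain ⟨F, hF, h⟩ := coords_lemma d m c δ hδ (List.finRange d)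
  set κ : ℝ := 1 / (hi - (lo + d / 4 ^ m)) with hκ
  have hgap : 0 < hi - (lo + d / 4 ^ m) := by linarith
  have hκ0 : 0 < κ := by positivity
  have hL1 : IsLayer (lay (d := d) (fun s => s (Sum.inr 0)) (fun _ => 0)
      (fun s => κ * (hi - s (Sum.inr 1))) (fun s => κ * (hi - s (Sum.inr 1)) - 1)) :=
    lay_isLayer (IsAff.proj _) (IsAff.const _) (((IsAff.const _).sub (IsAff.proj _)).cmul _)
      ((((IsAff.const _).sub (IsAff.proj _)).cmul _).sub (IsAff.const _))
  have hL2 : IsLayer (lay (d := d) (fun s => s (Sum.inr 0)) (fun s => s (Sum.inr 1))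
      (fun s => y * (s (Sum.inr 2) - s (Sum.inr 3)) - s (Sum.inr 0)) (fun _ => 0)) :=
    lay_isLayer (IsAff.proj _) (IsAff.proj _)
      ((((IsAff.proj _).sub (IsAff.proj _)).cmul _).sub (IsAff.proj _)) (IsAff.const _)
  have hL3 : IsLayer (lay (d := d) (fun s => s (Sum.inr 0) + s (Sum.inr 2))
      (fun s => s (Sum.inr 1)) (fun _ => 0) (fun _ => 0)) :=
    lay_isLayer ((IsAff.proj _).add (IsAff.proj _)) (IsAff.proj _) (IsAff.const _) (IsAff.const _)
  refine ⟨_, by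
    have := RN.step hL3 (RN.step hL2 (RN.step hL1 hF))
    rwa [List.length_finRange] at this, ?_⟩
  intro s h1 h2 h3
  obtain ⟨a1, a2, a3, a4⟩ := h s h1 h2 (by rw [h3])
  simp only [List.length_finRange, h3, zero_add] at a3 a4
  have hsum : ((List.finRange d).map fun t => (min (|s (Sum.inl t) - c t| / δ) 1) ^ 2).sum =
      ∑ t, (min (|s (Sum.inl t) - c t| / δ) 1) ^ 2 := by
    rw [← List.ofFn_eq_map, List.sum_ofFn]
  rw [hsum] at a3 a4
  generalize ∑ t, (min (|s (Sum.inl t) - c t| / δ) 1) ^ 2 = Q at *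
  simp only [Function.comp, lay_inl, lay_0, lay_1, lay_2, lay_3]
  generalize F s = r at *
  simp only [a1, a2, max_eq_left h2, max_self, max_eq_left (h1 _)]
  generalize r (Sum.inr 1) = S at *
  generalize s (Sum.inr 0) = o at *
  have hI : ∃ I, max (κ * (hi - S)) 0 - max (κ * (hi - S) - 1) 0 = I ∧ 0 ≤ I ∧ I ≤ 1 ∧
      (1 ≤ κ * (hi - S) → I = 1) ∧ (κ * (hi - S) ≤ 0 → I = 0) := by
    refine ⟨_, rfl, ?_⟩
    generalize κ * (hi - S) = z
    rcases le_total z 0 with hz | hz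
    · rw [max_eq_right hz, max_eq_right (by linarith)]
      refine ⟨by norm_num, by norm_num, fun _ => by linarith, fun _ => by norm_num⟩
    · rcases le_total z 1 with hz' | hz'
      · rw [max_eq_left hz, max_eq_right (by linarith)]
        refine ⟨by linarith, by linarith, fun _ => by linarith, fun _ => by linarith⟩
      · rw [max_eq_left hz, max_eq_left (by linarith)]
        refine ⟨by linarith, by linarith, fun _ => by linarith, fun _ => by linarith⟩
  obtain ⟨I, hIe, hI0, hI1, hIa, hIb⟩ := hI
  rw [hIe]
  have hm : max (o + max (y * I - o) 0) 0 = max o (y * I) := by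
    rcases le_total (y * I - o) 0 with hz | hz
    · rw [max_eq_right hz, add_zero, max_eq_left h2, max_eq_left (by linarith)]
    · rw [max_eq_left hz, max_eq_left (by linarith), max_eq_right (by linarith)]; ring
  rw [hm]
  refine ⟨fun _ => trivial, trivial, le_max_left _ _, max_le_max le_rfl (by nlinarith), ?_, ?_⟩
  · intro hQ
    rw [hIa ?_]
    · simp
    · rw [hκ, one_div, inv_mul_eq_div, le_div_iff₀ hgap]
      linarith
  · intro hQ
    rw [hIb ?_]
    · simpa using h2
    · exact mul_nonpos_of_nonneg_of_nonpos hκ0.le (by linarith)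

/-- All data points. -/
theorem points_lemma {N : ℕ} (d m : ℕ) (c : Fin N → Fin d → ℝ) (y : Fin N → ℝ) (δ lo hi : ℝ)
    (hδ : 0 < δ) (hy : ∀ i, 0 ≤ y i) (hlh : lo + d / 4 ^ m < hi) (l : List (Fin N)) :
    ∃ F : ((Fin d ⊕ Fin 4) → ℝ) → ((Fin d ⊕ Fin 4) → ℝ), RN (l.length * (d * (m + 3) + 3)) F ∧
    ∀ (s : (Fin d ⊕ Fin 4) → ℝ) (v : ℝ), (∀ t, 0 ≤ s (Sum.inl t)) → 0 ≤ s (Sum.inr 0) →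
      s (Sum.inr 1) = 0 → s (Sum.inr 0) ≤ v →
      (∀ j, y j = v ∨ hi ≤ ∑ t, (min (|s (Sum.inl t) - c j t| / δ) 1) ^ 2) →
      s (Sum.inr 0) ≤ F s (Sum.inr 0) ∧ F s (Sum.inr 0) ≤ v ∧
      ∀ i ∈ l, y i = v → ∑ t, (min (|s (Sum.inl t) - c i t| / δ) 1) ^ 2 ≤ lo →
        F s (Sum.inr 0) = v := by
  induction l with
  | nil =>
    refine ⟨id, by simpa using RN.nil, ?_⟩
    intro s v h1 h2 h3 h4 h5
    simpa using h4
  | cons j l ih =>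
    obtain ⟨F, hF, h⟩ := ih
    obtain ⟨G, hG, h'⟩ := point_lemma d m (c j) δ lo hi (y j) hδ (hy j) hlh
    refine ⟨F ∘ G, by
      have := hG.comp hF
      rwa [show (j :: l).length * (d * (m + 3) + 3)
        = d * (m + 3) + 3 + l.length * (d * (m + 3) + 3) by simp; ring], ?_⟩
    intro s v h1 h2 h3 h4 h5
    obtain ⟨a1, a2, a3, a4, a5, a6⟩ := h' s h1 h2 h3
    have hv : G s (Sum.inr 0) ≤ v := by
      rcases h5 j with hj | hj
      · exact a4.trans (max_le h4 hj.le)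
      · rw [a6 hj]; exact h4
    obtain ⟨b1, b2, b3⟩ := h (G s) v (by simpa [a1] using h1) (h2.trans a3) a2 hv
      (by simpa only [a1] using h5)
    simp only [a1] at b3
    simp only [Function.comp]
    refine ⟨a3.trans b1, b2, ?_⟩
    intro i hi' hiv hlo
    rcases List.mem_cons.1 hi' with rfl | hmem
    · apply le_antisymm b2
      rw [← hiv]
      exact (a5 hlo).trans b1
    · exact b3 i hmem hiv hlo

/-- Geometry-free core network. -/
theorem core_net {N : ℕ} (d m k : ℕ) (hk : d + 4 ≤ k) (c : Fin N → Fin d → ℝ) (y : Fin N → ℝ)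
    (δ lo hi B : ℝ)
    (hδ : 0 < δ) (hy : ∀ i, 0 ≤ y i) (hlh : lo + d / 4 ^ m < hi) :
    ∃ net : MLP d 1, net.width = k ∧ net.depth = N * (d * (m + 3) + 3) + 3 ∧
      ∀ (x : Fin d → ℝ) (i : Fin N), (∀ t, 0 ≤ x t + B) →
        (∀ j, y j = y i ∨ hi ≤ ∑ t, (min (|x t - c j t| / δ) 1) ^ 2) →
        ∑ t, (min (|x t - c i t| / δ) 1) ^ 2 ≤ lo → net.eval x 0 = y i := by
  obtain ⟨F, hF, h⟩ := points_lemma d m (fun i t => c i t + B) y δ lo hi hδ hy hlh (List.finRange N)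
  have hk0 : 0 < k := by omega
  let tail : MLP k 1 := MLP.last (fun _ j => if j = ⟨0, hk0⟩ then 1 else 0) 0
  have hlast : IsLayer (fun (s : (Fin d ⊕ Fin 4) → ℝ) (_ : Fin k) => max (s (Sum.inr 0)) 0) :=
    fun i => ⟨_, IsAff.proj (Sum.inr 0), fun s => rfl⟩
  have hfirst : IsLayer (fun (x : Fin d → ℝ) =>
      (Sum.elim (fun t => max (x t + B) 0) (fun _ => max 0 0) : (Fin d ⊕ Fin 4) → ℝ)) := by
    rintro (t | j)
    · exact ⟨_, (IsAff.proj t).add (IsAff.const B), fun s => rfl⟩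
    · exact ⟨_, IsAff.const 0, fun s => rfl⟩
  obtain ⟨n1, hd1, hw1, he1⟩ := exists_cons finSumFinEquiv (Equiv.refl _) hlast tail
  obtain ⟨n2, hd2, hw2, hw2', he2⟩ := exists_rn finSumFinEquiv hF n1
  obtain ⟨n3, hd3, hw3, he3⟩ := exists_cons (Equiv.refl _) finSumFinEquiv hfirst n2
  have htd : tail.depth = 1 := rfl
  have htw : tail.width = 0 := rfl
  rw [List.length_finRange] at hd2
  refine ⟨n3, by omega, by omega, ?_⟩
  intro x i hx hfar hnear
  have e3 := he3 x
  simp only [Equiv.refl_symm, Equiv.coe_refl, Function.comp_id] at e3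
  rw [e3, he2, he1]
  set s : (Fin d ⊕ Fin 4) → ℝ := Sum.elim (fun t => max (x t + B) 0) (fun _ => max 0 0) with hs
  have s0 : ∀ t, s (Sum.inl t) = x t + B := fun t => by simp [hs, hx t]
  have s1 : ∀ j, s (Sum.inr j) = 0 := fun t => by simp [hs]
  obtain ⟨b1, b2, b3⟩ := h s (y i) (by simpa [s0] using hx) (by rw [s1]) (s1 _)
    (by rw [s1]; exact hy i) (by simpa only [s0, add_sub_add_right_eq_sub] using hfar)
  have := b3 i (List.mem_finRange i) rfl (by simpa only [s0, add_sub_add_right_eq_sub] using hnear)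
  simp [tail, MLP.eval, Matrix.mulVec, dotProduct, this, hy i]

theorem lp_to_l2 (d : ℕ) (hd : 2 ≤ d) (p : ℝ≥0∞) (hp : 0 < p) (σ : ℝ) (hσ : 0 < σ)
    (v : Fin d → ℝ) (h : lpNorm p v ≤ σ) : ∑ t, (v t) ^ 2 ≤ (cplus p d * σ) ^ 2 := by
  have hd0 : (0 : ℝ) < d := by positivity
  unfold lpNorm at h
  unfold cplus rinv
  by_cases hpt : p = ⊤
  · simp only [hpt, if_true] at h ⊢
    have hb : ∀ t, |v t| ≤ σ := fun t => (le_ciSup (Set.finite_range _).bddAbove t).trans h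
    have : ∑ t, (v t) ^ 2 ≤ ∑ _t : Fin d, σ ^ 2 := by
      apply Finset.sum_le_sum
      intro t _
      rw [← sq_abs]
      gcongr
      exact hb t
    rw [max_eq_left (by norm_num), sub_zero, ← Real.sqrt_eq_rpow, mul_pow, Real.sq_sqrt hd0.le]
    simpa using this
  · simp only [hpt, if_false] at h ⊢
    set q := p.toReal with hq
    have hq0 : 0 < q := ENNReal.toReal_pos hp.ne' hpt
    have hS0 : 0 ≤ ∑ t, |v t| ^ q := Finset.sum_nonneg fun t _ => by positivity
    have hS : ∑ t, |v t| ^ q ≤ σ ^ q := by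
      have := Real.rpow_le_rpow (by positivity) h hq0.le
      rwa [← Real.rpow_mul hS0, one_div_mul_cancel hq0.ne', Real.rpow_one] at this
    rcases le_total q 2 with h2 | h2
    · rw [max_eq_right, Real.rpow_zero, one_mul]
      · have hb : ∀ t, |v t| ≤ σ := by
          intro t
          have h1 : |v t| ^ q ≤ σ ^ q :=
            (Finset.single_le_sum (f := fun t => |v t| ^ q) (fun t _ => by positivity)
              (Finset.mem_univ t)).trans hS
          exact (Real.rpow_le_rpow_iff (abs_nonneg _) hσ.le hq0).1 h1
        have : ∑ t, (v t) ^ 2 ≤ ∑ t, |v t| ^ q * σ ^ (2 - q) := by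
          apply Finset.sum_le_sum
          intro t _
          have e : (v t) ^ 2 = |v t| ^ q * |v t| ^ (2 - q) := by
            rw [← Real.rpow_add_of_nonneg (abs_nonneg _) hq0.le (by linarith)]
            rw [show q + (2 - q) = ((2 : ℕ) : ℝ) by push_cast; ring, Real.rpow_natCast, sq_abs]
          rw [e]
          exact mul_le_mul_of_nonneg_left
            (Real.rpow_le_rpow (abs_nonneg _) (hb t) (by linarith)) (by positivity)
        refine this.trans ?_
        rw [← Finset.sum_mul]
        calc _ ≤ σ ^ q * σ ^ (2 - q) := by gcongr
          _ = σ ^ 2 := by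
            rw [← Real.rpow_add hσ,
              show q + (2 - q) = ((2 : ℕ) : ℝ) by push_cast; ring, Real.rpow_natCast]
      · have : 1 / 2 ≤ 1 / q := by gcongr
        linarith
    · have hle : 1 / q ≤ 1 / 2 := by gcongr
      rw [max_eq_left (by linarith)]
      have key := Real.rpow_sum_le_const_mul_sum_rpow (Finset.univ : Finset (Fin d))
        (fun t => (v t) ^ 2) (p := q / 2) (by linarith)
      have e : ∀ t, |(v t) ^ 2| ^ (q / 2) = |v t| ^ q := by
        intro t
        rw [abs_pow, ← Real.rpow_natCast, ← Real.rpow_mul (abs_nonneg _)]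
        congr 1
        push_cast
        ring
      simp only [e, Finset.card_univ, Fintype.card_fin] at key
      simp only [abs_pow, sq_abs] at key
      have key2 : (∑ t, (v t) ^ 2) ^ (q / 2) ≤
          (((d : ℝ) ^ (1 / 2 - 1 / q) * σ) ^ 2) ^ (q / 2) := by
        refine key.trans ?_
        calc _ ≤ (d : ℝ) ^ (q / 2 - 1) * σ ^ q := by gcongr
          _ = _ := by
            rw [← Real.rpow_natCast _ 2, ← Real.rpow_mul (by positivity),
              Real.mul_rpow (by positivity) hσ.le, ← Real.rpow_mul hd0.le]
            congr 2 <;> (push_cast; field_simp)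
      exact (Real.rpow_le_rpow_iff (Finset.sum_nonneg fun t _ => sq_nonneg _) (sq_nonneg _)
        (by linarith)).1 key2

theorem far_l2 (d : ℕ) (x a b : Fin d → ℝ) (r δ : ℝ) (hr : 0 ≤ r) (hrδ : r ≤ δ)
    (h1 : ∑ t, (x t - a t) ^ 2 ≤ r ^ 2) (h2 : δ ^ 2 ≤ ∑ t, (a t - b t) ^ 2) :
    (δ - r) ^ 2 ≤ ∑ t, (x t - b t) ^ 2 := by
  have hn : ∀ u w : Fin d → ℝ, ∑ t, (u t - w t) ^ 2 =
      ‖(WithLp.toLp 2 u : EuclideanSpace ℝ (Fin d)) - WithLp.toLp 2 w‖ ^ 2 := by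
    intro u w
    rw [EuclideanSpace.norm_sq_eq]
    simp
  rw [hn] at *
  have e1 := abs_le_of_sq_le_sq h1 hr
  have e2 := abs_le_of_sq_le_sq h2 (norm_nonneg _)
  have e3 := norm_sub_le_norm_sub_add_norm_sub (WithLp.toLp 2 a : EuclideanSpace ℝ (Fin d))
    (WithLp.toLp 2 x) (WithLp.toLp 2 b)
  rw [norm_sub_rev (WithLp.toLp 2 a : EuclideanSpace ℝ (Fin d)) (WithLp.toLp 2 x)] at e3
  have := le_of_abs_le e1
  have := le_of_abs_le e2
  apply pow_le_pow_left₀ (by linarith)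
  linarith

/-- **Robust memorization with large width** (Theorem: width `k ≥ d + 6`). -/
theorem robust_memorization_large_width :
    ∃ C₀ : ℝ, 0 < C₀ ∧
      ∀ (N d C k : ℕ) (p : ℝ≥0∞) (σ δ : ℝ),
        2 ≤ N → 2 ≤ d → 2 ≤ C → d + 6 ≤ k → 0 < p → 0 < σ → 0 < δ →
        σ / δ < 1 / (2 * cplus p d) →
        ∀ (X : Fin N → Fin d → ℝ) (Y : Fin N → ℕ),
          (∀ i, 1 ≤ Y i ∧ Y i ≤ C) → Separated 2 δ X Y →
          ∃ net : MLP d 1, net.width = k ∧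
            (net.depth : ℝ) ≤
              C₀ * N * d * Real.logb 2 ((d : ℝ) / (1 - 2 * cplus p d * σ / δ)) ∧
            RobustMem p σ X Y (fun x => net.eval x 0) := by
  refine ⟨11, by norm_num, ?_⟩
  intro N d C k p σ δ hN hd hC hk hp hσ hδ hsd X Y hY hsep
  have hd0 : (0 : ℝ) < d := by positivity
  have hc0 : 0 < cplus p d := Real.rpow_pos_of_pos hd0 _
  set r := cplus p d * σ with hr
  have hr0 : 0 < r := by positivity
  set ε := 1 - 2 * cplus p d * σ / δ with hε
  set ρ := r / δ with hρ
  have hρ0 : 0 < ρ := by positivity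
  have hερ : ε = 1 - 2 * ρ := by rw [hε, hρ, hr]; ring
  have hρ1 : ρ < 1 / 2 := by
    rw [lt_div_iff₀ (by positivity)] at hsd
    have : ρ = σ / δ * (2 * cplus p d) / 2 := by rw [hρ, hr]; ring
    linarith
  have hrρ : r = ρ * δ := by rw [hρ]; field_simp
  have hε0 : 0 < ε := by linarith
  have hε1 : ε < 1 := by linarith
  set L := Real.logb 2 ((d : ℝ) / ε) with hL
  have hd2 : (2 : ℝ) ≤ d := by exact_mod_cast hd
  have hN2 : (2 : ℝ) ≤ N := by exact_mod_cast hN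
  have hde : 2 ≤ (d : ℝ) / ε := by
    rw [le_div_iff₀ hε0]; nlinarith
  have hL1 : 1 ≤ L := by
    rw [hL, Real.le_logb_iff_rpow_le (by norm_num) (by linarith)]
    simpa using hde
  set m := ⌈L⌉₊ with hm
  have hmL : (m : ℝ) ≤ L + 1 := (Nat.ceil_lt_add_one (by linarith)).le
  have h2m : (d : ℝ) / ε ≤ 2 ^ m := by
    rw [← Real.rpow_natCast, ← Real.logb_le_iff_le_rpow (by norm_num) (by linarith)]
    exact Nat.le_ceil _
  have hlh : ρ ^ 2 + d / 4 ^ m < (1 - ρ) ^ 2 := by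
    have h4 : (4 : ℝ) ^ m = 2 ^ m * 2 ^ m := by rw [← mul_pow]; norm_num
    have : (d : ℝ) / 4 ^ m < ε := by
      rw [div_lt_iff₀ (by positivity), h4]
      have : (d : ℝ) ≤ 2 ^ m * ε := by rwa [div_le_iff₀ hε0] at h2m
      have h2 : (2 : ℝ) ≤ 2 ^ m := hde.trans h2m
      nlinarith
    nlinarith
  obtain ⟨net, hw, hdep, hev⟩ := core_net d m k (by omega) X (fun i => (Y i : ℝ)) δ (ρ ^ 2)
    ((1 - ρ) ^ 2) (r + ∑ i, ∑ t, |X i t|) hδ (fun i => by positivity) hlh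
  refine ⟨net, hw, ?_, ?_⟩
  · rw [hdep]
    push_cast
    have hNd : (1 : ℝ) ≤ N * d := by nlinarith
    have h1 : (N : ℝ) * d * m ≤ N * d * (L + 1) := by gcongr
    have h2 : (N : ℝ) * d ≤ N * d * L := le_mul_of_one_le_right (by positivity) hL1
    nlinarith
  · intro i x hx
    have hnear : ∑ t, (x t - X i t) ^ 2 ≤ r ^ 2 := by
      simpa using lp_to_l2 d hd p hp σ hσ (x - X i) hx
    apply hev x i
    · intro t
      have h1 : (x t - X i t) ^ 2 ≤ r ^ 2 :=
        (Finset.single_le_sum (f := fun t => (x t - X i t) ^ 2) (fun t _ => sq_nonneg _)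
          (Finset.mem_univ t)).trans hnear
      have h2 := abs_le_of_sq_le_sq h1 hr0.le
      have h3 : |X i t| ≤ ∑ t, |X i t| :=
        Finset.single_le_sum (f := fun t => |X i t|) (fun t _ => abs_nonneg _) (Finset.mem_univ t)
      have h4 : ∑ t, |X i t| ≤ ∑ i, ∑ t, |X i t| :=
        Finset.single_le_sum (f := fun i => ∑ t, |X i t|)
          (fun i _ => Finset.sum_nonneg fun t _ => abs_nonneg _) (Finset.mem_univ i)
      have h5 := neg_abs_le (X i t)
      linarith [neg_le_of_abs_le h2]
    · intro j
      by_cases hij : Y i = Y j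
      · left; rw [hij]
      · right
        have h1 := hsep.1 i j hij
        have h2 : δ ^ 2 ≤ ∑ t, (X i t - X j t) ^ 2 := by
          unfold lpNorm at h1
          simp only [ENNReal.ofNat_ne_top, if_false, ENNReal.toReal_ofNat, Real.rpow_ofNat,
            Pi.sub_apply, sq_abs] at h1
          rw [← Real.sqrt_eq_rpow] at h1
          exact (Real.le_sqrt' hδ).1 h1
        have h3 := far_l2 d x (X i) (X j) r δ hr0.le (by nlinarith) hnear h2
        by_cases hbig : ∃ t, δ ≤ |x t - X j t|
        · obtain ⟨t, ht⟩ := hbig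
          have : (min (|x t - X j t| / δ) 1) ^ 2 = 1 := by
            rw [min_eq_right (by rwa [le_div_iff₀ hδ, one_mul])]; norm_num
          have h4 := Finset.single_le_sum (f := fun t => (min (|x t - X j t| / δ) 1) ^ 2)
            (fun t _ => sq_nonneg _) (Finset.mem_univ t)
          simp only [this] at h4
          nlinarith
        · push Not at hbig
          have : ∀ t, (min (|x t - X j t| / δ) 1) ^ 2 = (x t - X j t) ^ 2 / δ ^ 2 := by
            intro t
            rw [min_eq_left (by rw [div_le_iff₀ hδ]; linarith [hbig t]), div_pow, sq_abs]
          simp only [this]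
          rw [← Finset.sum_div, le_div_iff₀ (by positivity)]
          calc (1 - ρ) ^ 2 * δ ^ 2 = (δ - r) ^ 2 := by rw [hrρ]; ring
            _ ≤ _ := h3
    · have : ∀ t, (min (|x t - X i t| / δ) 1) ^ 2 ≤ (x t - X i t) ^ 2 / δ ^ 2 := by
        intro t
        rw [← sq_abs (x t - X i t), ← div_pow]
        gcongr
        exact min_le_left _ _
      refine (Finset.sum_le_sum fun t _ => this t).trans ?_
      rw [← Finset.sum_div, hρ, div_pow]
      gcongr

end
end

section
/- Let N, d, C be natural numbers at least 2, let p ∈ (0, ∞], let k be a natural number with 7 ≤ k ≤ d + 5, and let σ, δ > 0 satisfy σ/δ ≤ a_{p,d} · N^{−2/(k−6)}, where a_{p,d} = (1/(8√e)) · d^{−1/2 + [1/p − 1/2]_−} (with 1/∞ = 0). Then there is a universal constant C₀ such that for every δ-separated dataset D of size N with C classes in ℝ^d, there exists a feedforward ReLU neural network f : ℝ^d → ℝ of width k and depth at most C₀ · N · k · log₂(k) that (σ, p)-robustly memorizes D. -/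
open scoped ENNReal BigOperators

noncomputable section

section JL
open MeasureTheory ProbabilityTheory

lemma gauss_slab (v : NNReal) (hv : v ≠ 0) (s : ℝ) (hs : 0 ≤ s) :
    (gaussianReal 0 v).real (Set.Icc (-s) s) ≤ s / Real.sqrt v := by
  have hv0 : (0:ℝ) < v := by positivity
  rw [measureReal_def, gaussianReal_apply_eq_integral _ hv, ENNReal.toReal_ofReal
    (integral_nonneg fun x => gaussianPDFReal_nonneg _ _ _)]
  have hb : ∀ x ∈ Set.Icc (-s) s, ‖gaussianPDFReal 0 v x‖ ≤ 1 / (2 * Real.sqrt v) := by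
    intro x _
    rw [Real.norm_of_nonneg (gaussianPDFReal_nonneg _ _ _), gaussianPDFReal_def]
    have h1 : Real.exp (-(x - 0) ^ 2 / (2 * v)) ≤ 1 := by
      rw [Real.exp_le_one_iff]
      exact div_nonpos_of_nonpos_of_nonneg (by nlinarith [sq_nonneg (x-0)]) (by positivity)
    have h2 : 2 * Real.sqrt v ≤ Real.sqrt (2 * Real.pi * v) := by
      apply Real.le_sqrt_of_sq_le
      rw [mul_pow, Real.sq_sqrt hv0.le]
      nlinarith [Real.pi_gt_three]
    have h3 : 0 < Real.sqrt v := Real.sqrt_pos.2 hv0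
    calc _ ≤ (Real.sqrt (2 * Real.pi * v))⁻¹ * 1 :=
          mul_le_mul_of_nonneg_left h1 (by positivity)
      _ ≤ _ := by rw [mul_one, one_div]; gcongr
  have := norm_setIntegral_le_of_norm_le_const (μ := volume) (s := Set.Icc (-s) s) (by simp) hb
  refine (le_abs_self _).trans (this.trans_eq ?_)
  rw [measureReal_def, Real.volume_Icc, ENNReal.toReal_ofReal (by linarith)]
  field_simp
  ring

lemma std_slab {d : ℕ} (w : EuclideanSpace ℝ (Fin d)) (δ s : ℝ) (hδ : 0 < δ) (hw : δ ≤ ‖w‖)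
    (hs : 0 ≤ s) :
    (stdGaussian (EuclideanSpace ℝ (Fin d))).real {g | |inner ℝ w g| ≤ s} ≤ s / δ := by
  have hm := IsGaussian.map_eq_gaussianReal (μ := stdGaussian (EuclideanSpace ℝ (Fin d)))
    (innerSL ℝ w)
  rw [integral_strongDual_stdGaussian, variance_dual_stdGaussian, innerSL_apply_norm] at hm
  have hw0 : 0 < ‖w‖ := hδ.trans_le hw
  have e : {g | |inner ℝ w g| ≤ s} = (innerSL ℝ w) ⁻¹' (Set.Icc (-s) s) := by
    ext g; simp [abs_le]
  have h2 := gauss_slab (‖w‖^2).toNNReal (by simpa using norm_pos_iff.1 hw0) s hs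
  rw [← hm, map_measureReal_apply (by fun_prop) measurableSet_Icc, ← e,
    Real.coe_toNNReal _ (by positivity), Real.sqrt_sq hw0.le] at h2
  exact h2.trans (by gcongr)

lemma std_norm {d : ℕ} : Integrable (fun g => ‖g‖^2) (stdGaussian (EuclideanSpace ℝ (Fin d))) ∧
    ∫ g, ‖g‖^2 ∂(stdGaussian (EuclideanSpace ℝ (Fin d))) = d := by
  have hi : ∀ i : Fin d, Integrable (fun g : EuclideanSpace ℝ (Fin d) => (g i)^2)
      (stdGaussian (EuclideanSpace ℝ (Fin d))) ∧
      ∫ g : EuclideanSpace ℝ (Fin d), (g i)^2 ∂(stdGaussian (EuclideanSpace ℝ (Fin d))) = 1 := by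
    intro i
    have e : ∀ g : EuclideanSpace ℝ (Fin d), g i = innerSL ℝ (EuclideanSpace.single i (1:ℝ)) g := by
      intro g; rw [innerSL_apply_apply, EuclideanSpace.inner_single_left]; simp
    simp_rw [e]
    constructor
    · exact (IsGaussian.memLp_dual _ _ 2 (by simp)).integrable_sq
    · rw [← variance_of_integral_eq_zero (by fun_prop) (integral_strongDual_stdGaussian _),
        variance_dual_stdGaussian, innerSL_apply_norm]
      simp
  simp_rw [EuclideanSpace.real_norm_sq_eq]
  refine ⟨integrable_finsetSum _ fun i _ => (hi i).1, ?_⟩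
  rw [integral_finsetSum _ fun i _ => (hi i).1]
  simp [(hi _).2]

/-- choose one good direction -/
lemma one_dir {d : ℕ} (hd : 0 < d) {α : Type*} (P : Finset α) (w : α → EuclideanSpace ℝ (Fin d))
    (δ s q : ℝ) (hδ : 0 < δ) (hs : 0 ≤ s) (hq : 0 < q) (hw : ∀ a ∈ P, δ ≤ ‖w a‖)
    (hsq : s / δ ≤ q / 2) :
    ∃ g : EuclideanSpace ℝ (Fin d), ‖g‖ ≤ 2 * Real.sqrt d ∧
      ((P.filter fun a => |inner ℝ (w a) g| ≤ s).card : ℝ) ≤ q * P.card := by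
  classical
  have hd' : (0:ℝ) < d := by exact_mod_cast hd
  set μ := stdGaussian (EuclideanSpace ℝ (Fin d)) with hμ
  rcases P.eq_empty_or_nonempty with rfl | hP
  · exact ⟨0, by simp, by simp⟩
  have hc : (0:ℝ) < P.card := by exact_mod_cast hP.card_pos
  have hms : ∀ a, MeasurableSet {g | |inner ℝ (w a) g| ≤ s} := fun a =>
    measurableSet_le (by fun_prop) (by fun_prop)
  have hint : ∀ a ∈ P, Integrable ({g | |inner ℝ (w a) g| ≤ s}.indicator (fun _ => (1:ℝ))) μ :=
    fun a _ => (integrable_const (1:ℝ)).indicator (hms a)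
  obtain ⟨F1, hF1d⟩ : ∃ F1 : EuclideanSpace ℝ (Fin d) → ℝ, F1 = fun g =>
    (∑ a ∈ P, {g | |inner ℝ (w a) g| ≤ s}.indicator (fun _ => (1:ℝ)) g) / (q * P.card) := ⟨_, rfl⟩
  obtain ⟨F2, hF2d⟩ : ∃ F2 : EuclideanSpace ℝ (Fin d) → ℝ, F2 = fun g =>
    ‖g‖^2 / (4 * (d:ℝ)) := ⟨_, rfl⟩
  have hF1 : Integrable F1 μ := by
    rw [hF1d]; exact (integrable_finsetSum _ hint).div_const _
  have hF2 : Integrable F2 μ := by rw [hF2d]; exact std_norm.1.div_const _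
  obtain ⟨g, hg⟩ := exists_le_integral (hF1.add hF2)
  have hlt : ∫ a, (F1 + F2) a ∂μ ≤ 1 := by
    rw [integral_add' hF1 hF2, hF1d, hF2d, integral_div, integral_div, std_norm.2,
      integral_finsetSum _ hint]
    have h1 : ∑ a ∈ P, ∫ g, {g | |inner ℝ (w a) g| ≤ s}.indicator (fun _ => (1:ℝ)) g ∂μ
        ≤ P.card * (q/2) := by
      rw [← nsmul_eq_mul]
      apply Finset.sum_le_card_nsmul
      intro a ha
      rw [integral_indicator_const _ (hms a), smul_eq_mul, mul_one]
      exact (std_slab _ δ s hδ (hw a ha) hs).trans hsq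
    have h2 : (∑ a ∈ P, ∫ g, {g | |inner ℝ (w a) g| ≤ s}.indicator (fun _ => (1:ℝ)) g ∂μ)
      / (q * P.card) ≤ 1/2 := by
      rw [div_le_iff₀ (by positivity)]; linarith
    have h3 : (d:ℝ) / (4 * d) = 1/4 := by field_simp
    linarith
  have hg' := hg.trans hlt
  simp only [Pi.add_apply, hF1d, hF2d] at hg'
  have hcount : (∑ a ∈ P, {g | |inner ℝ (w a) g| ≤ s}.indicator (fun _ => (1:ℝ)) g)
      = ((P.filter fun a => |inner ℝ (w a) g| ≤ s).card : ℝ) := by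
    rw [Finset.card_filter]; push_cast
    refine Finset.sum_congr rfl fun a _ => ?_
    simp [Set.indicator]
  rw [hcount] at hg'
  have p1 : 0 ≤ ((P.filter fun a => |inner ℝ (w a) g| ≤ s).card : ℝ) / (q * P.card) := by positivity
  have p2 : 0 ≤ ‖g‖^2 / (4 * (d:ℝ)) := by positivity
  refine ⟨g, ?_, ?_⟩
  · have : ‖g‖^2 / (4 * (d:ℝ)) ≤ 1 := by linarith
    rw [div_le_one (by positivity)] at this
    apply le_of_sq_le_sq _ (by positivity)
    rw [mul_pow, Real.sq_sqrt hd'.le]; linarith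
  · have : ((P.filter fun a => |inner ℝ (w a) g| ≤ s).card : ℝ) / (q * P.card) ≤ 1 := by linarith
    rwa [div_le_one (by positivity)] at this

lemma many_dir {d : ℕ} (hd : 0 < d) {α : Type*} (w : α → EuclideanSpace ℝ (Fin d))
    (δ s q : ℝ) (hδ : 0 < δ) (hs : 0 ≤ s) (hq : 0 < q)
    (hsq : s / δ ≤ q / 2) (m : ℕ) : ∀ (P : Finset α) (_ : ∀ a ∈ P, δ ≤ ‖w a‖),
    ∃ g : Fin m → EuclideanSpace ℝ (Fin d), (∀ l, ‖g l‖ ≤ 2 * Real.sqrt d) ∧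
      ((P.filter fun a => ∀ l, |inner ℝ (w a) (g l)| ≤ s).card : ℝ) ≤ q ^ m * P.card := by
  induction m with
  | zero => intro P _; exact ⟨Fin.elim0, fun l => l.elim0, by simp⟩
  | succ m ih =>
    intro P hw
    obtain ⟨g0, hg0, hc0⟩ := one_dir hd P w δ s q hδ hs hq hw hsq
    obtain ⟨g, hg, hc⟩ := ih (P.filter fun a => |inner ℝ (w a) g0| ≤ s)
      (fun a ha => hw a (Finset.mem_filter.1 ha).1)
    refine ⟨Fin.cons g0 g, ?_, ?_⟩
    · intro l; refine Fin.cases ?_ ?_ l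
      · simpa using hg0
      · intro l; simpa using hg l
    · simp only [Fin.forall_fin_succ, Fin.cons_zero, Fin.cons_succ]
      rw [← Finset.filter_filter]
      refine hc.trans ?_
      rw [pow_succ, mul_assoc]
      gcongr
end JL

section Net

/-- affine functionals -/
def AffF {κ : Type} [Fintype κ] (f : (κ → ℝ) → ℝ) : Prop :=
  ∃ (w : κ → ℝ) (c : ℝ), ∀ x, f x = ∑ j, w j * x j + c

variable {κ : Type} [Fintype κ]

lemma AffF.const (c : ℝ) : AffF (fun _ : κ → ℝ => c) := ⟨0, c, by simp⟩

lemma AffF.proj (i : κ) : AffF (fun x : κ → ℝ => x i) := by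
  classical
  exact ⟨fun j => if j = i then 1 else 0, 0, by simp⟩

lemma AffF.add {f g : (κ → ℝ) → ℝ} (hf : AffF f) (hg : AffF g) : AffF (fun x => f x + g x) := by
  obtain ⟨w, c, h⟩ := hf
  obtain ⟨w', c', h'⟩ := hg
  refine ⟨w + w', c + c', fun x => ?_⟩
  simp only [h, h', Pi.add_apply, add_mul, Finset.sum_add_distrib]; ring

lemma AffF.smul {f : (κ → ℝ) → ℝ} (a : ℝ) (hf : AffF f) : AffF (fun x => a * f x) := by
  obtain ⟨w, c, h⟩ := hf
  refine ⟨a • w, a * c, fun x => ?_⟩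
  simp only [h, Pi.smul_apply, smul_eq_mul, mul_add, Finset.mul_sum, mul_assoc]

lemma AffF.sub {f g : (κ → ℝ) → ℝ} (hf : AffF f) (hg : AffF g) : AffF (fun x => f x - g x) := by
  have := hf.add (hg.smul (-1))
  convert! this using 2; ring

/-- functions computed by a stack of hidden layers indexed by `κ` -/
inductive Comp {κ : Type} [Fintype κ] : ℕ → ((κ → ℝ) → (κ → ℝ)) → Prop
  | id : Comp 0 (fun x => x)
  | cons (A : (κ → ℝ) → κ → ℝ) (hA : ∀ i, AffF (fun x => A x i)) {n : ℕ}
      {F : (κ → ℝ) → (κ → ℝ)} : Comp n F → Comp (n + 1) (fun x => F (fun i => max (A x i) 0))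

lemma Comp.single (A : (κ → ℝ) → κ → ℝ) (hA : ∀ i, AffF (fun x => A x i)) :
    Comp 1 (fun x i => max (A x i) 0) := Comp.cons A hA Comp.id

lemma Comp.comp {n n' : ℕ} {F G : (κ → ℝ) → (κ → ℝ)} (hF : Comp n F) (hG : Comp n' G) :
    Comp (n + n') (fun x => G (F x)) := by
  induction hF with
  | id => simpa using hG
  | cons A hA _ ih =>
    rw [Nat.add_right_comm]
    exact Comp.cons A hA ih

lemma mlp_of_comp {k : ℕ} (e : κ ≃ Fin k) {n : ℕ} {F : (κ → ℝ) → (κ → ℝ)} (hF : Comp n F)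
    {g : (κ → ℝ) → ℝ} (hg : AffF g) :
    ∃ net : MLP k 1, net.width ≤ k ∧ net.depth = n + 1 ∧
      ∀ x : Fin k → ℝ, net.eval x 0 = g (F (fun i => x (e i))) := by
  induction hF with
  | id =>
    obtain ⟨w, c, h⟩ := hg
    refine ⟨MLP.last (fun _ j => w (e.symm j)) (fun _ => c), by simp [MLP.width], by simp [MLP.depth],
      fun x => ?_⟩
    rw [h]
    simp only [MLP.eval, Pi.add_apply, Matrix.mulVec, dotProduct]
    rw [← Equiv.sum_comp e]; simp
  | cons A hA _ ih =>
    obtain ⟨net, h1, h2, h3⟩ := ih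
    choose w c h using hA
    beta_reduce at h
    refine ⟨MLP.cons (fun i j => w (e.symm i) (e.symm j)) (fun i => c (e.symm i)) net, ?_, ?_, ?_⟩
    · simp [MLP.width, h1]
    · simp [MLP.depth, h2]
    · intro x
      refine (h3 _).trans ?_
      congr 2
      funext i
      rw [h]
      simp only [Pi.add_apply, Matrix.mulVec, dotProduct]
      rw [← Equiv.sum_comp e]; simp

lemma mlp_full {d k : ℕ} (e : κ ≃ Fin k) {n : ℕ} {F : (κ → ℝ) → (κ → ℝ)} (hF : Comp n F)
    {g : (κ → ℝ) → ℝ} (hg : AffF g) (A : (Fin d → ℝ) → κ → ℝ) (hA : ∀ i, AffF (fun x => A x i)) :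
    ∃ net : MLP d 1, net.width = k ∧ net.depth = n + 2 ∧
      ∀ x : Fin d → ℝ, net.eval x 0 = g (F (fun i => max (A x i) 0)) := by
  obtain ⟨net, h1, h2, h3⟩ := mlp_of_comp e hF hg
  choose w c h using hA
  beta_reduce at h
  refine ⟨MLP.cons (fun i j => w (e.symm i) j) (fun i => c (e.symm i)) net, ?_, ?_, ?_⟩
  · simp [MLP.width, h1]
  · simp [MLP.depth, h2]
  · intro x
    refine (h3 _).trans ?_
    congr 2
    funext i
    rw [h]
    simp only [Pi.add_apply, Matrix.mulVec, dotProduct]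
    simp

/-- the encoded state -/
def st {m : ℕ} (z : Fin m → ℝ) (t u a b : ℝ) : Fin m ⊕ Fin 6 → ℝ :=
  Sum.elim z ![t, u, a, b, 0, 0]

lemma relu_st {m : ℕ} (z : Fin m → ℝ) (t u a b : ℝ) (hz : ∀ l, 0 ≤ z l) :
    (fun i => max (st z t u a b i) 0) = st z (max t 0) (max u 0) (max a 0) (max b 0) := by
  funext i
  rcases i with l | i
  · simp [st, hz]
  · fin_cases i <;> simp [st]

/-- a layer fixing the `z` part -/
lemma layer {m : ℕ} (T U A B : (Fin m ⊕ Fin 6 → ℝ) → ℝ) (hT : AffF T) (hU : AffF U)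
    (hA : AffF A) (hB : AffF B) :
    ∃ F, Comp 1 F ∧ ∀ (z : Fin m → ℝ) (t u a b : ℝ), (∀ l, 0 ≤ z l) →
      F (st z t u a b) = st z (max (T (st z t u a b)) 0) (max (U (st z t u a b)) 0)
        (max (A (st z t u a b)) 0) (max (B (st z t u a b)) 0) := by
  refine ⟨_, Comp.single (fun x => st (fun l => x (Sum.inl l)) (T x) (U x) (A x) (B x)) ?_,
    fun z t u a b hz => relu_st _ _ _ _ _ (by simpa [st] using hz)⟩
  rintro (l | i)
  · exact AffF.proj _
  · fin_cases i
    · exact hT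
    · exact hU
    · exact hA
    · exact hB
    · exact AffF.const 0
    · exact AffF.const 0

/-- violation of the box constraint in one coordinate -/
def viol (r c z : ℝ) : ℝ := max (z - c - r) 0 + max (c - z - r) 0

lemma stage1 {m : ℕ} (c : Fin m → ℝ) (r : ℝ) (L : List (Fin m)) :
    ∃ F, Comp L.length F ∧ ∀ (z : Fin m → ℝ) (t u a b : ℝ), (∀ l, 0 ≤ z l) → 0 ≤ t → 0 ≤ u →
      0 ≤ a → 0 ≤ b → ∃ u' a' b' : ℝ, 0 ≤ u' ∧ 0 ≤ a' ∧ 0 ≤ b' ∧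
        F (st z t u a b) = st z t u' a' b' ∧
        u' + a' + b' = u + a + b + (L.map fun j => viol r (c j) (z j)).sum := by
  induction L with
  | nil => exact ⟨_, Comp.id, fun z t u a b hz ht hu ha hb =>
      ⟨u, a, b, hu, ha, hb, rfl, by simp⟩⟩
  | cons j L ih =>
    obtain ⟨F, hF, h⟩ := ih
    obtain ⟨G, hl, hG⟩ := layer (m := m) (fun x => x (Sum.inr 0))
      (fun x => x (Sum.inr 1) + x (Sum.inr 2) + x (Sum.inr 3))
      (fun x => x (Sum.inl j) - c j - r) (fun x => c j - x (Sum.inl j) - r)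
      (AffF.proj _) (((AffF.proj _).add (AffF.proj _)).add (AffF.proj _))
      (((AffF.proj _).sub (AffF.const _)).sub (AffF.const _))
      (((AffF.const _).sub (AffF.proj _)).sub (AffF.const _))
    refine ⟨_, by rw [List.length_cons, add_comm]; exact hl.comp hF, ?_⟩
    intro z t u a b hz ht hu ha hb
    obtain ⟨u', a', b', h1, h2, h3, h4, h5⟩ := h z t (u + a + b) (max (z j - c j - r) 0)
      (max (c j - z j - r) 0) hz ht (by positivity) (by positivity) (by positivity)
    refine ⟨u', a', b', h1, h2, h3, ?_, ?_⟩
    · have e1 : max t 0 = t := max_eq_left ht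
      have e2 : max (u + a + b) 0 = u + a + b := max_eq_left (by positivity)
      have : G (st z t u a b) = st z t (u + a + b) (max (z j - c j - r) 0)
          (max (c j - z j - r) 0) := by
        rw [hG _ _ _ _ _ hz]
        simp [st, e1, e2]
      rw [this, h4]
    · rw [h5, List.map_cons, List.sum_cons, viol]; ring

/-- bump function -/
def bump {m : ℕ} (r : ℝ) (c z : Fin m → ℝ) : ℝ := max (1 - (∑ j, viol r (c j) (z j)) / r) 0

lemma stage2 {m : ℕ} (c : Fin m → ℝ) (r y : ℝ) :
    ∃ F, Comp (m + 3) F ∧ ∀ (z : Fin m → ℝ) (t : ℝ), (∀ l, 0 ≤ z l) → 0 ≤ t →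
        F (st z t 0 0 0) = st z (max t (y * bump r c z)) 0 0 0 := by
  obtain ⟨F, hF, h⟩ := stage1 c r (List.finRange m)
  rw [List.length_finRange] at hF
  obtain ⟨G1, l1, g1⟩ := layer (m := m) (fun x => x (Sum.inr 0))
      (fun x => 1 - r⁻¹ * (x (Sum.inr 1) + x (Sum.inr 2) + x (Sum.inr 3)))
      (fun x => 0) (fun x => 0)
      (AffF.proj _) ((AffF.const _).sub
        ((((AffF.proj _).add (AffF.proj _)).add (AffF.proj _)).smul _))
      (AffF.const _) (AffF.const _)
  obtain ⟨G2, l2, g2⟩ := layer (m := m) (fun x => x (Sum.inr 0)) (fun x => 0)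
      (fun x => y * x (Sum.inr 1) - x (Sum.inr 0)) (fun x => 0)
      (AffF.proj _) (AffF.const _) (((AffF.proj _).smul _).sub (AffF.proj _))
      (AffF.const _)
  obtain ⟨G3, l3, g3⟩ := layer (m := m) (fun x => x (Sum.inr 0) + x (Sum.inr 2)) (fun x => 0)
      (fun x => 0) (fun x => 0)
      ((AffF.proj _).add (AffF.proj _)) (AffF.const _) (AffF.const _) (AffF.const _)
  refine ⟨_, ((hF.comp l1).comp l2).comp l3, ?_⟩
  intro z t hz ht
  obtain ⟨u', a', b', h1, h2, h3, h4, h5⟩ := h z t 0 0 0 hz ht le_rfl le_rfl le_rfl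
  have e1 : max t 0 = t := max_eq_left ht
  have hb : max (1 - r⁻¹ * (u' + a' + b')) 0 = bump r c z := by
    rw [h5, bump, Fin.sum_univ_def, div_eq_inv_mul]; simp
  have e3 : t + max (y * bump r c z - t) 0 = max t (y * bump r c z) := by
    rcases le_total (y * bump r c z) t with h | h
    · rw [max_eq_right (by linarith), max_eq_left h]; ring
    · rw [max_eq_left (by linarith), max_eq_right h]; ring
  have e4 : max (max t (y * bump r c z)) 0 = max t (y * bump r c z) :=
    max_eq_left (ht.trans (le_max_left _ _))
  have s1 : G1 (st z t u' a' b') = st z t (bump r c z) 0 0 := by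
    rw [g1 _ _ _ _ _ hz, ← hb]
    simp [st, e1]
  have s2 : G2 (st z t (bump r c z) 0 0) = st z t 0 (max (y * bump r c z - t) 0) 0 := by
    rw [g2 _ _ _ _ _ hz]
    simp [st, e1]
  rw [h4, s1, s2, g3 _ _ _ _ _ hz]
  simp [st, e3, e4]

lemma stage3 {m : ℕ} {α : Type} (c : α → Fin m → ℝ) (r : ℝ) (y : α → ℝ) (L : List α) :
    ∃ F, Comp (L.length * (m + 3)) F ∧ ∀ (z : Fin m → ℝ) (t : ℝ), (∀ l, 0 ≤ z l) → 0 ≤ t →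
      ∃ t', F (st z t 0 0 0) = st z t' 0 0 0 ∧ t ≤ t' ∧ (∀ i ∈ L, y i * bump r (c i) z ≤ t') ∧
        ∀ V, t ≤ V → (∀ i ∈ L, y i * bump r (c i) z ≤ V) → t' ≤ V := by
  induction L with
  | nil => exact ⟨_, by simpa using Comp.id, fun z t _ _ => ⟨t, rfl, le_rfl, by simp, fun V h _ => h⟩⟩
  | cons i L ih =>
    obtain ⟨F, hF, h⟩ := ih
    obtain ⟨G, hG, h'⟩ := stage2 (c i) r (y i)
    refine ⟨_, by rw [List.length_cons, add_mul, one_mul, add_comm]; exact hG.comp hF, ?_⟩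
    intro z t hz ht
    obtain ⟨t', a1, a2, a3, a4⟩ := h z (max t (y i * bump r (c i) z)) hz
      (ht.trans (le_max_left _ _))
    refine ⟨t', ?_, (le_max_left _ _).trans a2, ?_, ?_⟩
    · simp only [h' z t hz ht, a1]
    · simp only [List.mem_cons, forall_eq_or_imp]
      exact ⟨(le_max_right _ _).trans a2, a3⟩
    · intro V hV hL
      simp only [List.mem_cons, forall_eq_or_imp] at hL
      exact a4 V (max_le hV hL.1) hL.2

lemma viol_nonneg (r c z : ℝ) : 0 ≤ viol r c z := by unfold viol; positivity

lemma bump_one {m : ℕ} (r : ℝ) (c z : Fin m → ℝ) (h : ∀ l, |z l - c l| ≤ r) : bump r c z = 1 := by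
  have : ∀ j, viol r (c j) (z j) = 0 := by
    intro j
    have := abs_le.1 (h j)
    rw [viol, max_eq_right (by linarith), max_eq_right (by linarith), add_zero]
  simp [bump, this]

lemma bump_le_one {m : ℕ} (r : ℝ) (hr : 0 < r) (c z : Fin m → ℝ) : bump r c z ≤ 1 := by
  have : 0 ≤ (∑ j, viol r (c j) (z j)) / r :=
    div_nonneg (Finset.sum_nonneg fun j _ => viol_nonneg _ _ _) hr.le
  exact max_le (by linarith) zero_le_one

lemma bump_zero {m : ℕ} (r : ℝ) (hr : 0 < r) (c z : Fin m → ℝ) (l : Fin m)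
    (h : 2 * r ≤ |z l - c l|) : bump r c z = 0 := by
  have h1 : r ≤ viol r (c l) (z l) := by
    unfold viol
    rcases abs_cases (z l - c l) with h' | h'
    · have := le_max_left (z l - c l - r) 0
      have := le_max_right (c l - z l - r) 0
      linarith
    · have := le_max_right (z l - c l - r) 0
      have := le_max_left (c l - z l - r) 0
      linarith
  have h2 := Finset.single_le_sum (f := fun j => viol r (c j) (z j))
    (fun j _ => viol_nonneg _ _ _) (Finset.mem_univ l)
  have : 1 ≤ (∑ j, viol r (c j) (z j)) / r := by
    rw [le_div_iff₀ hr]; linarith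
  exact max_eq_right (by linarith)

/-- memorization after linear projection -/
lemma net_of_proj {d m N : ℕ} (M : Matrix (Fin m) (Fin d) ℝ) (X : Fin N → Fin d → ℝ) (Y : Fin N → ℕ)
    (S : Fin N → Set (Fin d → ℝ)) (ρ : ℝ) (hρ : 0 < ρ)
    (hS : ∀ i, ∀ x ∈ S i, ∀ l, |M.mulVec x l - M.mulVec (X i) l| ≤ ρ)
    (hsep : ∀ i j, Y i ≠ Y j → ∃ l, 3 * ρ < |M.mulVec (X i) l - M.mulVec (X j) l|) :
    ∃ net : MLP d 1, net.width = m + 6 ∧ net.depth = N * (m + 3) + 2 ∧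
      ∀ i, ∀ x ∈ S i, net.eval x 0 = Y i := by
  obtain ⟨B, hB⟩ : ∃ B : ℝ, ∀ i l, |M.mulVec (X i) l| ≤ B := by
    refine ⟨∑ i, ∑ l, |M.mulVec (X i) l|, fun i l => ?_⟩
    refine le_trans ?_ (Finset.single_le_sum (f := fun i => ∑ l, |M.mulVec (X i) l|)
      (fun i _ => Finset.sum_nonneg fun l _ => abs_nonneg _) (Finset.mem_univ i))
    exact Finset.single_le_sum (f := fun l => |M.mulVec (X i) l|)
      (fun l _ => abs_nonneg _) (Finset.mem_univ l)
  obtain ⟨F, hF, h⟩ := stage3 (fun i l => M.mulVec (X i) l + (B + ρ)) ρ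
    (fun i => (Y i : ℝ)) (List.finRange N)
  rw [List.length_finRange] at hF
  obtain ⟨net, n1, n2, n3⟩ := mlp_full (d := d) finSumFinEquiv hF (AffF.proj (Sum.inr 0))
    (fun x => st (fun l => M.mulVec x l + (B + ρ)) 0 0 0 0) (by
      rintro (l | i)
      · exact ⟨M l, B + ρ, fun x => rfl⟩
      · fin_cases i <;> exact AffF.const 0)
  refine ⟨net, n1, n2, fun i x hx => ?_⟩
  have hz : ∀ l, 0 ≤ M.mulVec x l + (B + ρ) := by
    intro l
    have h1 := abs_le.1 (hS i x hx l)
    have h2 := abs_le.1 (hB i l)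
    linarith
  rw [n3, relu_st _ _ _ _ _ hz]
  simp only [max_self]
  obtain ⟨t', a1, a2, a3, a4⟩ := h _ 0 hz le_rfl
  rw [a1]
  show t' = Y i
  apply le_antisymm
  · refine a4 _ (by positivity) fun j _ => ?_
    by_cases hj : Y i = Y j
    · rw [hj]
      exact mul_le_of_le_one_right (by positivity) (bump_le_one _ hρ _ _)
    · obtain ⟨l, hl⟩ := hsep i j hj
      rw [bump_zero ρ hρ _ _ l, mul_zero]
      · positivity
      · rw [add_sub_add_right_eq_sub]
        have h1 := hS i x hx l
        have h2 := abs_sub_le (M.mulVec (X i) l) (M.mulVec x l) (M.mulVec (X j) l)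
        rw [abs_sub_comm (M.mulVec (X i) l) (M.mulVec x l)] at h2
        linarith
  · have := a3 i (List.mem_finRange i)
    rwa [bump_one, mul_one] at this
    intro l
    rw [add_sub_add_right_eq_sub]
    exact hS i x hx l

end Net

section Norms

lemma lpNorm_two {d : ℕ} (x : Fin d → ℝ) : lpNorm 2 x = ‖(WithLp.toLp 2 x : EuclideanSpace ℝ (Fin d))‖ := by
  rw [lpNorm, if_neg (by simp), EuclideanSpace.norm_eq, Real.sqrt_eq_rpow]
  simp

lemma coord_le {d : ℕ} {P σ : ℝ} (hP : 0 < P) (x : Fin d → ℝ)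
    (h : (∑ i, |x i| ^ P) ^ (1 / P) ≤ σ) : ∑ i, |x i| ^ P ≤ σ ^ P := by
  have h0 : 0 ≤ ∑ i, |x i| ^ P := Finset.sum_nonneg fun i _ => by positivity
  have := Real.rpow_le_rpow (by positivity) h hP.le
  rwa [← Real.rpow_mul h0, one_div_mul_cancel hP.ne', Real.rpow_one] at this

lemma lp_to_two {d : ℕ} (hd : 0 < d) (p : ℝ≥0∞) (hp : 0 < p) (σ : ℝ) (hσ : 0 < σ) (x : Fin d → ℝ)
    (h : lpNorm p x ≤ σ) : lpNorm 2 x ≤ σ * (d:ℝ) ^ (-min (rinv p - 1 / 2) 0) := by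
  have hd' : (0:ℝ) < d := by exact_mod_cast hd
  suffices hs : ∑ i, (x i)^2 ≤ (σ * (d:ℝ) ^ (-min (rinv p - 1 / 2) 0))^2 by
    rw [lpNorm_two, EuclideanSpace.norm_eq]
    apply Real.sqrt_le_iff.2
    refine ⟨by positivity, by simpa using hs⟩
  by_cases hpt : p = ⊤
  · subst hpt
    rw [lpNorm, if_pos rfl] at h
    have hi : ∀ i, |x i| ≤ σ := fun i =>
      (le_ciSup (f := fun i => |x i|) (Set.finite_range _).bddAbove i).trans h
    have e : -min (rinv ⊤ - 1/2) 0 = 1/2 := by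
      rw [rinv, if_pos rfl]; norm_num
    rw [e, ← Real.sqrt_eq_rpow, mul_pow, Real.sq_sqrt hd'.le]
    calc ∑ i, (x i)^2 ≤ ∑ _i : Fin d, σ^2 := by
          refine Finset.sum_le_sum fun i _ => ?_
          exact sq_le_sq' (by linarith [abs_le.1 (hi i)]) (abs_le.1 (hi i)).2
      _ = _ := by simp [mul_comm]
  · have hP : 0 < p.toReal := ENNReal.toReal_pos hp.ne' hpt
    rw [lpNorm, if_neg hpt] at h
    rw [rinv, if_neg hpt]
    set P := p.toReal
    have hsum := coord_le hP x h
    rcases le_or_gt P 2 with hP2 | hP2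
    · have e : min (1 / P - 1/2) 0 = 0 := by
        apply min_eq_right
        rw [sub_nonneg]; exact one_div_le_one_div_of_le hP hP2
      rw [e]
      simp only [neg_zero, Real.rpow_zero, mul_one]
      have hi : ∀ i, |x i| ≤ σ := fun i => by
        have h1 : |x i| ^ P ≤ σ ^ P := (Finset.single_le_sum (f := fun i => |x i| ^ P)
          (fun i _ => by positivity) (Finset.mem_univ i)).trans hsum
        exact (Real.rpow_le_rpow_iff (abs_nonneg _) hσ.le hP).1 h1
      have hsq : ∀ i, (x i)^2 ≤ σ ^ (2 - P) * |x i| ^ P := fun i => by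
        rcases (abs_nonneg (x i)).eq_or_lt with h0 | h0
        · have : x i = 0 := abs_eq_zero.1 h0.symm
          rw [this]; simp only [ne_eq, OfNat.ofNat_ne_zero, not_false_eq_true, zero_pow]; positivity
        · calc (x i)^2 = |x i| ^ (2 - P) * |x i| ^ P := by
                rw [← Real.rpow_add h0, sub_add_cancel, Real.rpow_two, sq_abs]
            _ ≤ _ := by
                have := Real.rpow_le_rpow h0.le (hi i) (sub_nonneg.2 hP2)
                gcongr
      calc ∑ i, (x i)^2 ≤ ∑ i, σ ^ (2 - P) * |x i| ^ P := Finset.sum_le_sum fun i _ => hsq i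
        _ = σ ^ (2 - P) * ∑ i, |x i| ^ P := by rw [Finset.mul_sum]
        _ ≤ σ ^ (2 - P) * σ ^ P := by gcongr
        _ = σ ^ 2 := by rw [← Real.rpow_add hσ, sub_add_cancel, Real.rpow_two]
    · have e : min (1 / P - 1/2) 0 = 1 / P - 1/2 := by
        apply min_eq_left
        rw [sub_nonpos]; exact one_div_le_one_div_of_le (by norm_num) hP2.le
      rw [e]
      have h1 := Real.rpow_sum_le_const_mul_sum_rpow (Finset.univ) (fun i => (x i)^2)
        (p := P / 2) (by linarith)
      have e2 : ∀ i, |x i ^ 2| ^ (P/2) = |x i| ^ P := fun i => by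
        rw [abs_pow, ← Real.rpow_natCast, ← Real.rpow_mul (abs_nonneg _)]
        congr 1; push_cast; ring
      simp_rw [e2] at h1
      simp only [abs_pow, sq_abs, Finset.card_univ, Fintype.card_fin] at h1
      have h2 : (∑ i, (x i)^2) ^ (P/2) ≤ (d:ℝ) ^ (P/2 - 1) * σ ^ P :=
        h1.trans (by gcongr)
      rw [← Real.rpow_le_rpow_iff (z := P/2) (Finset.sum_nonneg fun i _ => sq_nonneg _)
        (by positivity) (by positivity)]
      refine h2.trans_eq ?_
      rw [← Real.rpow_natCast, ← Real.rpow_mul (by positivity), Real.mul_rpow hσ.le (by positivity),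
        ← Real.rpow_mul hd'.le, mul_comm]
      congr 2
      · push_cast; ring
      · push_cast; field_simp; ring

end Norms

lemma proj_exists {N d m : ℕ} (hN : 2 ≤ N) (hd : 0 < d) (hm : 0 < m) (X : Fin N → Fin d → ℝ)
    (Y : Fin N → ℕ) (r δ : ℝ) (hr : 0 < r) (hδ : 0 < δ)
    (hsep : ∀ i j, Y i ≠ Y j → δ ≤ lpNorm 2 (X i - X j))
    (hrδ : Real.sqrt d * r / δ ≤ 1 / (8 * Real.sqrt (Real.exp 1)) * (N:ℝ) ^ (-(2:ℝ) / m)) :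
    ∃ M : Matrix (Fin m) (Fin d) ℝ,
      (∀ x y : Fin d → ℝ, lpNorm 2 (x - y) ≤ r → ∀ l,
        |M.mulVec x l - M.mulVec y l| ≤ 2 * Real.sqrt d * r) ∧
      ∀ i j, Y i ≠ Y j → ∃ l, 3 * (2 * Real.sqrt d * r) < |M.mulVec (X i) l - M.mulVec (X j) l| := by
  classical
  have hN' : (0:ℝ) < N := by positivity
  set q : ℝ := (N:ℝ) ^ (-(2:ℝ) / m) with hq
  have hq0 : 0 < q := by positivity
  have hqm : q ^ m = ((N:ℝ)^2)⁻¹ := by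
    rw [hq, ← Real.rpow_natCast, ← Real.rpow_mul hN'.le, div_mul_cancel₀ _ (by positivity),
      Real.rpow_neg hN'.le, Real.rpow_two]
  have he : (3/2 : ℝ) ≤ Real.sqrt (Real.exp 1) := by
    apply Real.le_sqrt_of_sq_le
    linarith [Real.exp_one_gt_d9]
  have hs : 3 * (2 * Real.sqrt d * r) / δ ≤ q / 2 := by
    have h1 : 1 / (8 * Real.sqrt (Real.exp 1)) ≤ 1 / 12 := by
      apply one_div_le_one_div_of_le <;> linarith
    have h2 : 1 / (8 * Real.sqrt (Real.exp 1)) * q ≤ 1 / 12 * q := by gcongr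
    have h3 : 3 * (2 * Real.sqrt d * r) / δ = 6 * (Real.sqrt d * r / δ) := by ring
    linarith
  obtain ⟨P, hPd⟩ : ∃ P : Finset (Fin N × Fin N), P = Finset.univ.filter fun a => Y a.1 ≠ Y a.2 :=
    ⟨_, rfl⟩
  have hPc : P.card < N^2 := by
    have : P ⊆ Finset.univ.offDiag := by
      intro a ha
      rw [hPd, Finset.mem_filter] at ha
      rw [Finset.mem_offDiag]
      exact ⟨Finset.mem_univ _, Finset.mem_univ _, fun h => ha.2 (by rw [h])⟩
    have h1 := Finset.card_le_card this
    rw [Finset.offDiag_card, Finset.card_univ, Fintype.card_fin] at h1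
    have : 0 < N * N := by positivity
    rw [pow_two]; omega
  obtain ⟨g, hg, hc⟩ := many_dir hd
    (fun a : Fin N × Fin N => (WithLp.toLp 2 (X a.1 - X a.2) : EuclideanSpace ℝ (Fin d)))
    δ (3 * (2 * Real.sqrt d * r)) q hδ (by positivity) hq0 hs m P (by
      intro a ha
      rw [hPd, Finset.mem_filter] at ha
      rw [← lpNorm_two]; exact hsep _ _ ha.2)
  have hM : ∀ (x y : Fin d → ℝ) l, (Matrix.of fun l i => g l i).mulVec x l
      - (Matrix.of fun l i => g l i).mulVec y l
      = inner ℝ (WithLp.toLp 2 (x - y) : EuclideanSpace ℝ (Fin d)) (g l) := by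
    intro x y l
    rw [← Pi.sub_apply, ← Matrix.mulVec_sub]
    simp [Matrix.mulVec, dotProduct, PiLp.inner_apply]
  refine ⟨Matrix.of fun l i => g l i, ?_, ?_⟩
  · intro x y hxy l
    rw [hM]
    refine (abs_real_inner_le_norm _ _).trans ?_
    rw [lpNorm_two] at hxy
    rw [mul_comm]
    exact mul_le_mul (hg l) hxy (norm_nonneg _) (by positivity)
  · intro i j hij
    by_contra! hcon
    have hmem : (i, j) ∈ P.filter fun a : Fin N × Fin N => ∀ l,
        |inner ℝ (WithLp.toLp 2 (X a.1 - X a.2) : EuclideanSpace ℝ (Fin d)) (g l)|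
          ≤ 3 * (2 * Real.sqrt d * r) := by
      rw [Finset.mem_filter]
      refine ⟨by rw [hPd]; simpa using hij, fun l => ?_⟩
      rw [← hM]; exact hcon l
    have h1 : (1:ℝ) ≤ ((P.filter fun a : Fin N × Fin N => ∀ l,
        |inner ℝ (WithLp.toLp 2 (X a.1 - X a.2) : EuclideanSpace ℝ (Fin d)) (g l)|
          ≤ 3 * (2 * Real.sqrt d * r)).card : ℝ) := by
      exact_mod_cast Finset.card_pos.2 ⟨_, hmem⟩
    have h2 : q ^ m * P.card < 1 := by
      rw [hqm, inv_mul_lt_one₀ (by positivity)]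
      exact_mod_cast hPc
    linarith

/-- **Robust memorization with small width** (upper bound, `7 ≤ k ≤ d + 5`). -/
theorem robust_memorization_small_width :
    ∃ C₀ : ℝ, 0 < C₀ ∧
      ∀ (N d C k : ℕ) (p : ℝ≥0∞) (σ δ : ℝ),
        2 ≤ N → 2 ≤ d → 2 ≤ C → 7 ≤ k → k ≤ d + 5 → 0 < p → 0 < σ → 0 < δ →
        σ / δ ≤ (1 / (8 * Real.sqrt (Real.exp 1))) *
            (d : ℝ) ^ (-(1 : ℝ) / 2 + min (rinv p - 1 / 2) 0) *
            (N : ℝ) ^ (-(2 : ℝ) / ((k : ℝ) - 6)) →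
        ∀ (X : Fin N → Fin d → ℝ) (Y : Fin N → ℕ),
          (∀ i, 1 ≤ Y i ∧ Y i ≤ C) → Separated 2 δ X Y →
          ∃ net : MLP d 1, net.width = k ∧
            (net.depth : ℝ) ≤ C₀ * N * k * Real.logb 2 k ∧
            RobustMem p σ X Y (fun x => net.eval x 0) := by
  refine ⟨1, one_pos, ?_⟩
  intro N d C k p σ δ hN hd _ hk7 _ hp hσ hδ hσδ X Y _ hsep
  obtain ⟨m, rfl⟩ : ∃ m, k = m + 6 := ⟨k - 6, by omega⟩
  have hm : 0 < m := by omega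
  have hd0 : 0 < d := by omega
  have hd' : (0:ℝ) < d := by exact_mod_cast hd0
  have hr : 0 < σ * (d:ℝ) ^ (-min (rinv p - 1 / 2) 0) := by positivity
  obtain ⟨M, hM1, hM2⟩ := proj_exists hN hd0 hm X Y (σ * (d:ℝ) ^ (-min (rinv p - 1 / 2) 0)) δ hr hδ
    hsep.1 (by
      have e : ((m + 6 : ℕ) : ℝ) - 6 = m := by push_cast; ring
      rw [e] at hσδ
      have e2 : Real.sqrt d * (σ * (d:ℝ) ^ (-min (rinv p - 1 / 2) 0)) / δ
          = (Real.sqrt d * (d:ℝ) ^ (-min (rinv p - 1 / 2) 0)) * (σ / δ) := by ring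
      have e3 : (Real.sqrt d * (d:ℝ) ^ (-min (rinv p - 1 / 2) 0)) *
          (d : ℝ) ^ (-(1 : ℝ) / 2 + min (rinv p - 1 / 2) 0) = 1 := by
        rw [Real.sqrt_eq_rpow, ← Real.rpow_add hd', ← Real.rpow_add hd']
        convert! Real.rpow_zero _ using 2
        ring
      rw [e2]
      calc _ ≤ (Real.sqrt d * (d:ℝ) ^ (-min (rinv p - 1 / 2) 0)) * _ :=
            mul_le_mul_of_nonneg_left hσδ (by positivity)
        _ = 1 / (8 * Real.sqrt (Real.exp 1)) * ((Real.sqrt d * (d:ℝ) ^ (-min (rinv p - 1 / 2) 0)) *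
          (d : ℝ) ^ (-(1 : ℝ) / 2 + min (rinv p - 1 / 2) 0)) * (N : ℝ) ^ (-(2 : ℝ) / m) := by ring
        _ = _ := by rw [e3, mul_one])
  obtain ⟨net, h1, h2, h3⟩ := net_of_proj M X Y (fun i => {x | lpNorm p (x - X i) ≤ σ})
    (2 * Real.sqrt d * (σ * (d:ℝ) ^ (-min (rinv p - 1 / 2) 0))) (by positivity)
    (fun i x hx l => hM1 x (X i) (lp_to_two hd0 p hp σ hσ _ hx) l) hM2
  refine ⟨net, h1, ?_, fun i x hx => h3 i x hx⟩
  rw [h2]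
  have hlog : 1 ≤ Real.logb 2 ((m + 6 : ℕ) : ℝ) := by
    rw [Real.le_logb_iff_rpow_le (by norm_num) (by positivity)]
    push_cast
    rw [Real.rpow_one]
    linarith [(Nat.cast_nonneg m : (0:ℝ) ≤ m)]
  have hN' : (2:ℝ) ≤ N := by exact_mod_cast hN
  have h4 : (1:ℝ) * N * ((m + 6 : ℕ) : ℝ) * 1 ≤ 1 * N * ((m + 6 : ℕ) : ℝ) *
      Real.logb 2 ((m + 6 : ℕ) : ℝ) := by gcongr
  refine le_trans ?_ h4
  push_cast
  linarith

end
end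

section
/- Let N, d be natural numbers at least 2, let p ∈ (0, ∞], let k be a natural number with 1 ≤ k ≤ d − 1, and let σ, δ > 0 satisfy σ/δ > b_{p,d} · N^{−2/k}, where b_{p,d} = 2416 · d^{[1/p − 1/2]_+} (with 1/∞ = 0). Then there exists a δ-separated dataset D of size N with 2 classes in ℝ^d such that no feedforward ReLU neural network f : ℝ^d → ℝ of width k (of any depth) (σ, p)-robustly memorizes D. -/
open scoped ENNReal BigOperators

noncomputable section

open MeasureTheory in
lemma sep_card_bound {E : Type*} [NormedAddCommGroup E] [NormedSpace ℝ E] [FiniteDimensional ℝ E]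
    (k : ℕ) (hE : Module.finrank ℝ E = k + 1) (η : ℝ) (h0 : 0 < η) (h1 : η ≤ 1)
    (S : Finset E) (hS : ∀ x ∈ S, ‖x‖ = 1) (hsep : ∀ x ∈ S, ∀ y ∈ S, x ≠ y → η < ‖x - y‖) :
    (S.card : ℝ) ≤ 2 * (k + 1) * (1 + 2 / η) ^ k := by
  let _ : MeasurableSpace E := borel E
  have : BorelSpace E := ⟨rfl⟩
  let μ : Measure E := Measure.addHaar
  have hnt : Nontrivial E := Module.nontrivial_of_finrank_pos (R := ℝ) (by omega)
  set m := μ.real (Metric.ball 0 1) with hm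
  have hmpos : 0 < m := by
    apply ENNReal.toReal_pos
    · exact (Metric.measure_ball_pos μ 0 one_pos).ne'
    · exact measure_ball_lt_top.ne
  have hb : ∀ (x : E) (r : ℝ), 0 ≤ r → μ.real (Metric.ball x r) = r ^ (k+1) * m := by
    intro x r hr
    rw [← hE]
    rw [hm, measureReal_def, measureReal_def, Measure.addHaar_ball μ x hr, ENNReal.toReal_mul,
      ENNReal.toReal_ofReal (by positivity)]
  have key : (S.card : ℝ) * ((η/2)^(k+1) * m) + (1 - η/2)^(k+1) * m ≤ (1 + η/2)^(k+1) * m := by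
    rw [← hb 0 (1+η/2) (by linarith), ← hb 0 (1-η/2) (by linarith)]
    have hu : μ.real (⋃ x ∈ S, Metric.ball x (η/2)) = S.card * ((η/2)^(k+1) * m) := by
      rw [measureReal_biUnion_finset]
      · rw [Finset.sum_congr rfl (fun x _ => hb x (η/2) (by linarith))]
        simp
      · intro x hx y hy hxy
        apply Metric.ball_disjoint_ball
        rw [dist_eq_norm]
        have := hsep x hx y hy hxy
        linarith
      · intro x _
        exact measurableSet_ball
    have hfin : μ (⋃ x ∈ S, Metric.ball x (η/2)) ≠ ⊤ :=
      ((measure_biUnion_finset_le _ _).trans_lt (by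
        apply ENNReal.sum_lt_top.2
        intro x _
        exact measure_ball_lt_top)).ne
    rw [← hu, ← measureReal_union (h₁ := hfin)]
    · apply measureReal_mono
      · intro y hy
        rcases hy with hy | hy
        · simp only [Set.mem_iUnion, Metric.mem_ball, dist_eq_norm] at hy
          obtain ⟨x, hx, hy⟩ := hy
          simp only [Metric.mem_ball, dist_zero_right]
          have := hS x hx
          have := norm_le_norm_add_norm_sub' y x
          linarith
        · exact Metric.ball_subset_ball (by linarith) hy
      · exact measure_ball_lt_top.ne
    · rw [Set.disjoint_left]
      intro y hy hy2
      simp only [Set.mem_iUnion, Metric.mem_ball, dist_eq_norm] at hy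
      obtain ⟨x, hx, hy⟩ := hy
      simp only [Metric.mem_ball, dist_zero_right] at hy2
      have := hS x hx
      have := norm_le_norm_add_norm_sub' x y
      rw [norm_sub_rev] at this
      linarith
    · exact measurableSet_ball
  have key2 : (S.card : ℝ) * ((η/2)^(k+1)) + (1 - η/2)^(k+1) ≤ (1 + η/2)^(k+1) := by
    have : ((S.card : ℝ) * ((η/2)^(k+1)) + (1 - η/2)^(k+1)) * m ≤ (1 + η/2)^(k+1) * m := by
      linarith
    exact le_of_mul_le_mul_right this hmpos
  set x := η / 2 with hx
  have hxpos : 0 < x := by positivity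
  have bern : (1 + x)^(k+1) - (1-x)^(k+1) ≤ 2 * (k+1) * x * (1+x)^k := by
    have h := one_add_mul_le_pow (R := ℝ) (a := -(2 * x / (1+x))) (by
      have : 2 * x / (1+x) ≤ 2 := by
        rw [div_le_iff₀ (by linarith)]; linarith
      linarith) (k+1)
    have e : 1 + -(2 * x / (1+x)) = (1-x)/(1+x) := by field_simp; ring
    rw [e, div_pow, le_div_iff₀ (by positivity)] at h
    have e2 : (1 + ((k+1:ℕ):ℝ) * -(2 * x / (1+x))) * (1+x)^(k+1) =
        (1+x)^(k+1) - 2 * (k+1) * x * (1+x)^k := by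
      push_cast
      field_simp
      ring
    linarith
  have e3 : (2 * (k + 1) * (1 + 2 / η) ^ k) * x^(k+1) = 2 * (k+1) * x * (1+x)^k := by
    have : (1 + 2/η) = (1+x)/x := by rw [hx]; field_simp; ring
    rw [this, div_pow, pow_succ]; field_simp
  have : (S.card : ℝ) * x^(k+1) ≤ (2 * (k + 1) * (1 + 2 / η) ^ k) * x^(k+1) := by linarith
  exact le_of_mul_le_mul_right this (by positivity)

lemma exists_net {E : Type*} [NormedAddCommGroup E] [NormedSpace ℝ E] [FiniteDimensional ℝ E]
    (k : ℕ) (hE : Module.finrank ℝ E = k + 1) (η : ℝ) (h0 : 0 < η) (h1 : η ≤ 1) :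
    ∃ S : Finset E, S.Nonempty ∧ (∀ x ∈ S, ‖x‖ = 1) ∧ (∀ v : E, ‖v‖ = 1 → ∃ s ∈ S, ‖s - v‖ ≤ η) ∧
    (S.card : ℝ) ≤ 2 * (k + 1) * (1 + 2 / η) ^ k := by
  classical
  have hnt : Nontrivial E := Module.nontrivial_of_finrank_pos (R := ℝ) (by omega)
  let P : ℕ → Prop := fun n => ∃ S : Finset E, S.card = n ∧ (∀ x ∈ S, ‖x‖ = 1) ∧
    (∀ x ∈ S, ∀ y ∈ S, x ≠ y → η < ‖x - y‖)
  have hP0 : P 0 := ⟨∅, by simp⟩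
  obtain ⟨M, hM⟩ := exists_nat_ge (2 * ((k:ℝ) + 1) * (1 + 2 / η) ^ k)
  have hb : ∀ n, P n → n ≤ M := by
    rintro n ⟨S, rfl, h2, h3⟩
    exact_mod_cast (sep_card_bound k hE η h0 h1 S h2 h3).trans hM
  obtain ⟨S, hc, h2, h3⟩ := Nat.findGreatest_spec (P := P) (Nat.zero_le M) hP0
  have hnet : ∀ v : E, ‖v‖ = 1 → ∃ s ∈ S, ‖s - v‖ ≤ η := by
    intro v hv
    by_contra! hcon
    have hvS : v ∉ S := fun h => by
      have := hcon v h
      simp at this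
      linarith
    have : P (S.card + 1) := by
      refine ⟨insert v S, Finset.card_insert_of_notMem hvS, ?_, ?_⟩
      · intro x hx
        rcases Finset.mem_insert.1 hx with rfl | hx
        · exact hv
        · exact h2 x hx
      · intro x hx y hy hxy
        rcases Finset.mem_insert.1 hx with hx' | hx' <;> rcases Finset.mem_insert.1 hy with hy' | hy'
        · exact absurd (hx'.trans hy'.symm) hxy
        · rw [norm_sub_rev, hx']; exact hcon y hy'
        · rw [hy']; exact hcon x hx'
        · exact h3 x hx' y hy' hxy
    have := Nat.le_findGreatest (hb _ this) this
    omega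
  obtain ⟨v, hv⟩ := exists_norm_eq E (zero_le_one (α := ℝ))
  obtain ⟨s, hs, _⟩ := hnet v hv
  exact ⟨S, ⟨s, hs⟩, h2, hnet, sep_card_bound k hE η h0 h1 S h2 h3⟩

lemma exists_enum {α : Type*} (T : Finset α) (hT : T.Nonempty) (N : ℕ) (h : T.card ≤ N) :
    ∃ f : Fin N → α, (∀ i, f i ∈ T) ∧ ∀ a ∈ T, ∃ i, f i = a := by
  obtain ⟨a0, ha0⟩ := hT
  refine ⟨fun i => if hi : i.1 < T.card then T.equivFin.symm ⟨i, hi⟩ else a0, ?_, ?_⟩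
  · intro i
    dsimp only
    split_ifs
    · exact (T.equivFin.symm _).2
    · exact ha0
  · intro a ha
    refine ⟨⟨T.equivFin ⟨a, ha⟩, (T.equivFin ⟨a, ha⟩).2.trans_le h⟩, ?_⟩
    simp

lemma core_data {E : Type*} [NormedAddCommGroup E] [NormedSpace ℝ E] [FiniteDimensional ℝ E]
    (k : ℕ) (hk : 1 ≤ k) (hE : Module.finrank ℝ E = k + 1) (N : ℕ) (hN : 2 ≤ N) (δ : ℝ) (hδ : 0 < δ) :
    ∃ (X : Fin N → E) (Y : Fin N → ℕ), (∀ i, 1 ≤ Y i ∧ Y i ≤ 2) ∧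
      (∀ i j, Y i ≠ Y j → δ ≤ ‖X i - X j‖) ∧ (∃ i j, Y i ≠ Y j ∧ ‖X i - X j‖ = δ) ∧
      ∀ v : E, ‖v‖ = 1 → ∃ i j, Y i ≠ Y j ∧ ∃ t : ℝ,
        ‖X i - X j - t • v‖ ≤ 4832 * (N : ℝ) ^ (-(2 : ℝ) / (k : ℝ)) * δ := by
  classical
  have hnt : Nontrivial E := Module.nontrivial_of_finrank_pos (R := ℝ) (by omega)
  -- it suffices to provide two finite classes
  suffices H : ∃ A B : Finset E, A.card + B.card ≤ N ∧
      (∀ a ∈ A, ∀ b ∈ B, δ ≤ ‖b - a‖) ∧ (∃ a ∈ A, ∃ b ∈ B, ‖b - a‖ = δ) ∧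
      ∀ v : E, ‖v‖ = 1 → ∃ a ∈ A, ∃ b ∈ B, ∃ t : ℝ,
        ‖b - a - t • v‖ ≤ 4832 * (N : ℝ) ^ (-(2 : ℝ) / (k : ℝ)) * δ by
    obtain ⟨A, B, hc, hs, ⟨a0, ha0, b0, hb0, hab⟩, hv⟩ := H
    let T : Finset (E × ℕ) := A.image (fun a => (a, 1)) ∪ B.image (fun b => (b, 2))
    have hmem : ∀ z : E × ℕ, z ∈ T ↔ (z.1 ∈ A ∧ z.2 = 1) ∨ (z.1 ∈ B ∧ z.2 = 2) := by
      rintro ⟨z, n⟩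
      simp only [T, Finset.mem_union, Finset.mem_image, Prod.mk.injEq]
      constructor
      · rintro (⟨a, ha, rfl, rfl⟩ | ⟨a, ha, rfl, rfl⟩) <;> simp [ha]
      · rintro (⟨ha, rfl⟩ | ⟨ha, rfl⟩)
        · exact Or.inl ⟨z, ha, rfl, rfl⟩
        · exact Or.inr ⟨z, ha, rfl, rfl⟩
    have hTc : T.card ≤ N :=
      (Finset.card_union_le _ _).trans ((add_le_add Finset.card_image_le Finset.card_image_le).trans hc)
    obtain ⟨f, hf1, hf2⟩ := exists_enum T ⟨(a0, 1), (hmem _).2 (Or.inl ⟨ha0, rfl⟩)⟩ N hTc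
    have hA : ∀ a ∈ A, ∃ i, f i = (a, 1) := fun a ha => hf2 _ ((hmem _).2 (Or.inl ⟨ha, rfl⟩))
    have hB : ∀ a ∈ B, ∃ i, f i = (a, 2) := fun a ha => hf2 _ ((hmem _).2 (Or.inr ⟨ha, rfl⟩))
    refine ⟨fun i => (f i).1, fun i => (f i).2, ?_, ?_, ?_, ?_⟩
    · intro i
      rcases (hmem _).1 (hf1 i) with h | h <;> simp [h.2]
    · intro i j hij
      dsimp only at hij ⊢
      rcases (hmem _).1 (hf1 i) with h | h <;> rcases (hmem _).1 (hf1 j) with h' | h'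
      · exact absurd (h.2.trans h'.2.symm) hij
      · rw [norm_sub_rev]; exact hs _ h.1 _ h'.1
      · exact hs _ h'.1 _ h.1
      · exact absurd (h.2.trans h'.2.symm) hij
    · obtain ⟨i, hi⟩ := hA a0 ha0
      obtain ⟨j, hj⟩ := hB b0 hb0
      exact ⟨j, i, by simp [hi, hj], by simp [hi, hj, hab]⟩
    · intro v hv1
      obtain ⟨a, ha, b, hb, t, ht⟩ := hv v hv1
      obtain ⟨i, hi⟩ := hA a ha
      obtain ⟨j, hj⟩ := hB b hb
      exact ⟨j, i, by simp [hi, hj], t, by simpa [hi, hj] using ht⟩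
  have hNpos : (0:ℝ) < N := by exact_mod_cast (by omega : 0 < N)
  have hkpos : (0:ℝ) < k := by exact_mod_cast hk
  set y : ℝ := (N:ℝ) ^ (1 / (k:ℝ)) with hy
  have hypos : 0 < y := Real.rpow_pos_of_pos hNpos _
  have hyk : y ^ k = N := by
    rw [hy, ← Real.rpow_natCast, ← Real.rpow_mul hNpos.le]
    field_simp
    simp
  have hy2 : (N:ℝ) ^ (-(2:ℝ) / (k:ℝ)) = 1 / y^2 := by
    rw [hy, ← Real.rpow_natCast, ← Real.rpow_mul hNpos.le, one_div, ← Real.rpow_neg hNpos.le]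
    congr 1
    push_cast
    ring
  rw [hy2]
  by_cases hcase : y^2 ≤ 4832
  · obtain ⟨e, he⟩ := exists_norm_eq E hδ.le
    refine ⟨{0}, {e}, by simpa using hN, by simp [he], by simp [he], ?_⟩
    intro v _
    refine ⟨0, by simp, e, by simp, 0, ?_⟩
    simp only [sub_zero, zero_smul, he]
    have : 1 ≤ 4832 * (1 / y^2) := by
      rw [mul_one_div, le_div_iff₀ (by positivity)]; linarith
    nlinarith
  push Not at hcase
  have hy60 : 60 ≤ y := by nlinarith
  set η : ℝ := 30 / y with hη
  have hη0 : 0 < η := by positivity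
  have hη1 : η ≤ 1/2 := by
    rw [hη, div_le_iff₀ hypos]; linarith
  obtain ⟨S, ⟨s0, hs0⟩, hS1, hSnet, hSc⟩ := exists_net k hE η hη0 (by linarith)
  set R : ℝ := δ / (1 - η) with hR
  have h1η : 0 < 1 - η := by linarith
  have hRpos : 0 < R := by positivity
  set r : ℝ := η * R with hr
  have hrpos : 0 < r := by positivity
  have hRr : R - r = δ := by
    rw [hr, hR]; field_simp
  have hε : r * η ≤ 4832 * (1 / y^2) * δ := by
    have hR2 : R ≤ 2 * δ := by
      rw [hR, div_le_iff₀ h1η]; nlinarith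
    have : η^2 = 900 * (1/y^2) := by rw [hη, div_pow]; norm_num; ring
    have hq : 0 < 1 / y^2 := by positivity
    calc r * η = η^2 * R := by rw [hr]; ring
      _ ≤ η^2 * (2*δ) := by gcongr
      _ = 1800 * (1/y^2) * δ := by rw [this]; ring
      _ ≤ _ := by gcongr; norm_num
  refine ⟨S.image (fun s => r • s), S.image (fun s => R • s), ?_, ?_, ?_, ?_⟩
  · refine (add_le_add Finset.card_image_le Finset.card_image_le).trans ?_
    have hpow : ∀ n : ℕ, 1 ≤ n → 4 * ((n:ℝ) + 1) ≤ 12 ^ n := by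
      intro n hn
      induction n, hn using Nat.le_induction with
      | base => norm_num
      | succ n hn ih => push_cast; rw [pow_succ]; nlinarith [(Nat.cast_nonneg n : (0:ℝ) ≤ n)]
    have h3 : (1 + 2/η) ≤ y / 12 := by
      have : 2 / η = y / 15 := by rw [hη]; field_simp; norm_num
      rw [this]; linarith
    have h4 : (1 + 2/η)^k ≤ (y/12)^k := pow_le_pow_left₀ (by positivity) h3 k
    have h5 : (S.card : ℝ) + S.card ≤ N := by
      calc (S.card : ℝ) + S.card ≤ 4 * (k+1) * (1 + 2/η)^k := by linarith
        _ ≤ 4 * (k+1) * (y/12)^k := by gcongr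
        _ ≤ 12^k * (y/12)^k := by gcongr; exact hpow k hk
        _ = N := by rw [← mul_pow, ← hyk]; congr 1; ring
    exact_mod_cast h5
  · intro a ha b hb
    obtain ⟨s, hs, rfl⟩ := Finset.mem_image.1 ha
    obtain ⟨s', hs', rfl⟩ := Finset.mem_image.1 hb
    have := norm_sub_norm_le (R • s') (r • s)
    rw [norm_smul, norm_smul, hS1 s hs, hS1 s' hs', Real.norm_of_nonneg hRpos.le,
      Real.norm_of_nonneg hrpos.le] at this
    linarith
  · refine ⟨r • s0, Finset.mem_image_of_mem _ hs0, R • s0, Finset.mem_image_of_mem _ hs0, ?_⟩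
    rw [← sub_smul, hRr, norm_smul, hS1 s0 hs0, Real.norm_of_nonneg hδ.le, mul_one]
  · intro v hv
    obtain ⟨s, hs, hsv⟩ := hSnet v hv
    have hcont : ContinuousOn (fun t : ℝ => ‖R • s - t • v‖) (Set.Icc 0 R) := by fun_prop
    have hivt := intermediate_value_Icc' hRpos.le hcont
    have hmem : r ∈ Set.Icc (‖R • s - R • v‖) (‖R • s - (0:ℝ) • v‖) := by
      constructor
      · rw [← smul_sub, norm_smul, Real.norm_of_nonneg hRpos.le, hr]
        nlinarith
      · rw [zero_smul, sub_zero, norm_smul, hS1 s hs, Real.norm_of_nonneg hRpos.le]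
        linarith
    obtain ⟨t, _, ht⟩ := hivt hmem
    dsimp only at ht
    obtain ⟨s', hs', hs'u⟩ := hSnet (r⁻¹ • (R • s - t • v)) (by
      rw [norm_smul, ht, norm_inv, Real.norm_of_nonneg hrpos.le, inv_mul_cancel₀ hrpos.ne'])
    refine ⟨r • s', Finset.mem_image_of_mem _ hs', R • s, Finset.mem_image_of_mem _ hs, t, ?_⟩
    refine le_trans ?_ hε
    have : R • s - r • s' - t • v = -(r • (s' - r⁻¹ • (R • s - t • v))) := by
      rw [smul_sub, smul_inv_smul₀ hrpos.ne']; abel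
    rw [this, norm_neg, norm_smul, Real.norm_of_nonneg hrpos.le]
    gcongr

lemma lpNorm_two_eq {d : ℕ} (x : Fin d → ℝ) : lpNorm 2 x = Real.sqrt (∑ i, (x i)^2) := by
  unfold lpNorm
  rw [if_neg (by simp), Real.sqrt_eq_rpow]
  simp

lemma lpNorm_le_two {d : ℕ} (hd : 2 ≤ d) (p : ℝ≥0∞) (hp : 0 < p) (x : Fin d → ℝ) :
    lpNorm p x ≤ (d : ℝ) ^ max (rinv p - 1 / 2) 0 * lpNorm 2 x := by
  have hd1 : (1:ℝ) ≤ d := by exact_mod_cast (by omega : 1 ≤ d)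
  have hS0 : 0 ≤ lpNorm 2 x := by rw [lpNorm_two_eq]; positivity
  have hle : ∀ i, |x i| ≤ lpNorm 2 x := by
    intro i
    rw [lpNorm_two_eq]
    apply Real.abs_le_sqrt
    exact Finset.single_le_sum (f := fun i => (x i)^2) (fun i _ => sq_nonneg _) (Finset.mem_univ i)
  have hSsq : (lpNorm 2 x)^2 = ∑ i, (x i)^2 := by
    rw [lpNorm_two_eq, Real.sq_sqrt (Finset.sum_nonneg fun i _ => sq_nonneg _)]
  have hone : 1 ≤ (d : ℝ) ^ max (rinv p - 1 / 2) 0 := Real.one_le_rpow hd1 (le_max_right _ _)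
  have hweak : lpNorm p x ≤ lpNorm 2 x → lpNorm p x ≤ (d : ℝ) ^ max (rinv p - 1 / 2) 0 * lpNorm 2 x := by
    intro h
    exact h.trans (le_mul_of_one_le_left hS0 hone)
  by_cases hpt : p = ⊤
  · apply hweak
    haveI : Nonempty (Fin d) := ⟨⟨0, by omega⟩⟩
    conv_lhs => unfold lpNorm
    rw [if_pos hpt]
    exact ciSup_le hle
  have hq : 0 < p.toReal := ENNReal.toReal_pos hp.ne' hpt
  set q := p.toReal with hqdef
  have hlp : lpNorm p x = (∑ i, |x i| ^ q) ^ (1 / q) := by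
    unfold lpNorm; rw [if_neg hpt]
  have hsum0 : 0 ≤ ∑ i, |x i| ^ q := Finset.sum_nonneg fun i _ => Real.rpow_nonneg (abs_nonneg _) _
  by_cases h2 : 2 ≤ q
  · apply hweak
    rw [hlp]
    set S := lpNorm 2 x with hS
    have hb : ∑ i, |x i| ^ q ≤ S ^ q := by
      have : ∀ i, |x i| ^ q ≤ (x i)^2 * S ^ (q-2) := by
        intro i
        have e : |x i| ^ q = |x i| ^ (2:ℝ) * |x i| ^ (q - 2) := by
          rw [← Real.rpow_add_of_nonneg (abs_nonneg _) (by norm_num) (by linarith)]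
          congr 1; ring
        rw [e, Real.rpow_two, sq_abs]
        exact mul_le_mul_of_nonneg_left
          (Real.rpow_le_rpow (abs_nonneg _) (hle i) (by linarith)) (sq_nonneg _)
      calc ∑ i, |x i| ^ q ≤ ∑ i, (x i)^2 * S ^ (q-2) := Finset.sum_le_sum fun i _ => this i
        _ = S ^ 2 * S ^ (q-2) := by rw [← Finset.sum_mul, hSsq]
        _ = S ^ q := by
          rw [← Real.rpow_two, ← Real.rpow_add_of_nonneg hS0 (by norm_num) (by linarith)]
          congr 1; ring
    calc (∑ i, |x i| ^ q) ^ (1/q) ≤ (S ^ q) ^ (1/q) :=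
          Real.rpow_le_rpow hsum0 hb (by positivity)
      _ = S := by rw [← Real.rpow_mul hS0, mul_one_div_cancel hq.ne', Real.rpow_one]
  · push Not at h2
    have hr : rinv p = 1 / q := by unfold rinv; rw [if_neg hpt]
    have h12 : 1/2 ≤ 1/q := one_div_le_one_div_of_le hq h2.le
    rw [hr, max_eq_left (by linarith), hlp]
    have hpm := Real.rpow_sum_le_const_mul_sum_rpow_of_nonneg (Finset.univ : Finset (Fin d))
      (f := fun i => |x i| ^ q) (p := 2 / q) (by rw [le_div_iff₀ hq]; linarith)
      (fun i _ => Real.rpow_nonneg (abs_nonneg _) _)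
    have e : ∀ i, (|x i| ^ q) ^ (2/q) = (x i)^2 := by
      intro i
      rw [← Real.rpow_mul (abs_nonneg _), mul_div_cancel₀ _ hq.ne', Real.rpow_two, sq_abs]
    simp only [e, Finset.card_univ, Fintype.card_fin] at hpm
    rw [← hSsq] at hpm
    have h3 := Real.rpow_le_rpow (Real.rpow_nonneg hsum0 _) hpm (by norm_num : (0:ℝ) ≤ 1/2)
    rw [← Real.rpow_mul hsum0, Real.mul_rpow (by positivity) (by positivity),
      ← Real.rpow_mul (by positivity), ← Real.sqrt_eq_rpow (lpNorm 2 x ^ 2),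
      Real.sqrt_sq hS0] at h3
    convert h3 using 2
    · ring
    · congr 1; ring

/-- **Lower bound for robust memorization with small width** (`1 ≤ k ≤ d - 1`). -/
theorem robust_memorization_lower_bound
    (N d k : ℕ) (p : ℝ≥0∞) (σ δ : ℝ)
    (hN : 2 ≤ N) (hd : 2 ≤ d) (hk1 : 1 ≤ k) (hkd : k ≤ d - 1)
    (hp : 0 < p) (hσ : 0 < σ) (hδ : 0 < δ)
    (hratio : σ / δ > 2416 * (d : ℝ) ^ max (rinv p - 1 / 2) 0 *
      (N : ℝ) ^ (-(2 : ℝ) / (k : ℝ))) :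
    ∃ (X : Fin N → Fin d → ℝ) (Y : Fin N → ℕ),
      (∀ i, 1 ≤ Y i ∧ Y i ≤ 2) ∧ Separated 2 δ X Y ∧
      ∀ net : MLP d 1, net.width = k → ¬ RobustMem p σ X Y (fun x => net.eval x 0) := by
  obtain ⟨m, hm⟩ : ∃ m, d = (k + 1) + m := ⟨d - (k+1), by omega⟩
  obtain ⟨ι, hι⟩ : ∃ ι : EuclideanSpace ℝ (Fin (k+1)) →ₗ[ℝ] (Fin d → ℝ),
      ∀ x, lpNorm 2 (ι x) = ‖x‖ := by
    subst hm
    refine ⟨{ toFun := fun x => Fin.append (fun i => x i) (fun _ : Fin m => (0:ℝ)),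
              map_add' := ?_, map_smul' := ?_ }, ?_⟩
    · intro x y
      ext i
      refine Fin.addCases (fun i => ?_) (fun i => ?_) i <;> simp
    · intro c x
      ext i
      refine Fin.addCases (fun i => ?_) (fun i => ?_) i <;> simp
    · intro x
      rw [lpNorm_two_eq, EuclideanSpace.norm_eq]
      simp [Fin.sum_univ_add]
  obtain ⟨X, Y, hY, hsep, hatt, hcov⟩ := core_data (E := EuclideanSpace ℝ (Fin (k+1))) k hk1
    (by simp) N hN δ hδ
  refine ⟨fun i => ι (X i), Y, hY, ⟨?_, ?_⟩, ?_⟩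
  · intro i j hij
    rw [← map_sub, hι]
    exact hsep i j hij
  · obtain ⟨i, j, hij, h⟩ := hatt
    refine ⟨i, j, hij, ?_⟩
    rw [← map_sub, hι, h]
  intro net hw hmem
  cases net with
  | last W b => simp only [MLP.width] at hw; omega
  | @cons _ h _ W b rest =>
    have hh : h ≤ k := by
      simp only [MLP.width] at hw
      omega
    have hker : LinearMap.ker (W.mulVecLin ∘ₗ ι) ≠ ⊥ := by
      apply LinearMap.ker_ne_bot_of_finrank_lt
      simp
      omega
    obtain ⟨u, hu, hu0⟩ := (Submodule.ne_bot_iff _).1 hker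
    have hun : ‖u‖ ≠ 0 := norm_ne_zero_iff.2 hu0
    have hWv : ∀ c : ℝ, W.mulVec (ι (c • u)) = 0 := by
      intro c
      have : W.mulVec (ι u) = 0 := by simpa using hu
      rw [map_smul, Matrix.mulVec_smul, this, smul_zero]
    obtain ⟨i, j, hij, t, ht⟩ := hcov (‖u‖⁻¹ • u) (by
      rw [norm_smul, norm_inv, norm_norm, inv_mul_cancel₀ hun])
    set w := X i - X j - t • (‖u‖⁻¹ • u) with hwdef
    have hsmall : ∀ z : EuclideanSpace ℝ (Fin (k+1)), ‖z‖ = ‖w‖ / 2 → lpNorm p (ι z) ≤ σ := by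
      intro z hz
      refine (lpNorm_le_two hd p hp _).trans ?_
      rw [hι, hz]
      rw [gt_iff_lt, lt_div_iff₀ hδ] at hratio
      refine le_trans ?_ hratio.le
      have hc : 0 ≤ (d : ℝ) ^ max (rinv p - 1 / 2) 0 := by positivity
      calc (d : ℝ) ^ max (rinv p - 1 / 2) 0 * (‖w‖ / 2)
          ≤ (d : ℝ) ^ max (rinv p - 1 / 2) 0 *
            ((4832 * (N : ℝ) ^ (-(2 : ℝ) / (k : ℝ)) * δ) / 2) := by gcongr
        _ = _ := by ring
    have h1 := hmem i (ι (X i - (1/2 : ℝ) • w)) (by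
      rw [← map_sub]
      apply hsmall
      rw [sub_sub_cancel_left, norm_neg, norm_smul]
      norm_num
      ring)
    have h2 := hmem j (ι (X j + (1/2 : ℝ) • w)) (by
      rw [← map_sub]
      apply hsmall
      rw [add_sub_cancel_left, norm_smul]
      norm_num
      ring)
    have hxx : X i - (1/2 : ℝ) • w = X j + (1/2 : ℝ) • w + (t * ‖u‖⁻¹) • u := by
      have hww : (1/2 : ℝ) • w + (1/2 : ℝ) • w = w := by
        rw [← add_smul]; norm_num
      have e : X i = X j + w + (t * ‖u‖⁻¹) • u := by
        rw [hwdef, smul_smul]; abel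
      rw [sub_eq_iff_eq_add, e]
      nth_rewrite 1 [← hww]
      abel
    have hW : W.mulVec (ι (X i - (1/2 : ℝ) • w)) = W.mulVec (ι (X j + (1/2 : ℝ) • w)) := by
      rw [hxx, map_add ι (X j + (1/2 : ℝ) • w), Matrix.mulVec_add, hWv, add_zero]
    simp only [MLP.eval] at h1 h2
    rw [hW, h2] at h1
    exact hij (by exact_mod_cast h1.symm)

end
end
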